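/- For every natural number n with 2 ≤ n ≤ 5, there exists a positive real constant C_n such that N_n(B) is asymptotic to C_n · B · (log B)^(C(n,2) − 1) as B → ∞, where C(n,2) = n(n−1)/2 is the binomial coefficient; that is, N_n(B) / (B (log B)^(n(n−1)/2 − 1)) → C_n as B → ∞. -/

import Mathlib

/-- `f n r` is the number of subrings of `ℤ^n` (with identity `(1,…,1)`) of index `r`. -/
noncomputable def subringCount (n r : ℕ) : ℕ :=
  Nat.card {R : Subring (Fin n → ℤ) // R.toAddSubgroup.index = r}

/-- `N n B = ∑_{r ≤ B} f n r`. -/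
noncomputable def subringCountUpTo (n B : ℕ) : ℕ :=
  ∑ r ∈ Finset.Icc 1 B, subringCount n r

/-!
The Dirichlet series of `f_n` has an Euler product, because a subring of index `a b` with `a`, `b`
coprime is uniquely an intersection of subrings of index `a` and `b`. The subrings of prime index
`p` are the `n (n - 1) / 2` congruence subrings `x_i ≡ x_j (mod p)`. So if `f_n(p^k) / p^k` is
summable over all prime powers with `k ≥ 2`, then `f_n` is the Dirichlet convolution of
`n (n - 1) / 2` copies of `ζ` with a function `g` such that `∑ |g m| / m < ∞` and `∑ g m / m > 0`,
and the asymptotics follow from those of the sums `∑ (log (x / m))^j / m`.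

It remains to bound `f_n(p^k)`, and `n = 5` suffices. Fix the exponents `a_j` of the diagonal of the
Hermite normal form of `R` and the contact orders `d_ij`, the exponents of the groups
`{x_i - x_j | x ∈ R}`; this leaves polynomially many classes in `k`. A proportion bounded below of
the elements `x` of `R` is generic, meaning that `x_i - x_j` has valuation close to `d_ij`, so it
suffices to count the subrings of a class through one generic point and then to sum over the
lattice of all `x` with `p^d_ij ∣ x_i - x_j`. A subring of `ℤ^(m+1)` is the graph over its
projection `S ⊆ ℤ^m` of a ring homomorphism `S → ℤ/p^α`. Two such homomorphisms agreeing beyond the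
`i`-th pivot differ at that pivot by an element killed by a small power of `p`, because both are
compatible with multiplication by the generic point. When the coordinates are ordered so that `d_03`
is the largest contact order, this wins a factor `p^d_03 ≥ p^(k/10)`, and a factor `p^2` except when
all `d_ij` are `1` and `a_3 = 2`. In that case a finer relation restricts the last homomorphism
unless a resonance condition holds, and resonance in turn determines the projection to `ℤ^4`.
-/

namespace SubringAsymptotics

open Finset Filter Topology

/-! ### Subrings of `ℤ^n` of a given index -/

section Subrings

variable {n : ℕ}

/-- Coordinatewise reduction `ℤ^n → (ℤ/q)^n`. -/
abbrev reduction (n q : ℕ) : (Fin n → ℤ) →+* (Fin n → ZMod q) :=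
  (Int.castRingHom (ZMod q)).compLeft (Fin n)

lemma reduction_surjective (n q : ℕ) : Function.Surjective (reduction n q) := fun y => by
  choose x hx using fun i => ZMod.intCast_surjective (y i)
  exact ⟨x, funext hx⟩

lemma mem_of_reduction_eq_zero {H : AddSubgroup (Fin n → ℤ)} {q : ℕ} (hH : ∀ v, q • v ∈ H)
    {x : Fin n → ℤ} (hx : reduction n q x = 0) : x ∈ H := by
  choose v hv using fun i => (ZMod.intCast_zmod_eq_zero_iff_dvd (x i) q).mp (congrFun hx i)
  have : x = q • v := funext fun i => by simp [hv]
  exact this ▸ hH v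

lemma nsmul_mem_of_index_eq {R : Subring (Fin n → ℤ)} {r : ℕ}
    (hR : R.toAddSubgroup.index = r) (v : Fin n → ℤ) : r • v ∈ R := by
  subst hR
  exact R.toAddSubgroup.nsmul_index_mem v

lemma finite_subrings_of_index (n : ℕ) {r : ℕ} (hr : 0 < r) :
    Finite {R : Subring (Fin n → ℤ) // R.toAddSubgroup.index = r} := by
  have : NeZero r := ⟨hr.ne'⟩
  have : Finite (Subring (Fin n → ZMod r)) := Finite.of_injective _ SetLike.coe_injective
  refine Finite.of_injective (fun R => R.1.map (reduction n r)) fun R R' h => Subtype.ext ?_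
  have comap_map (T : {R : Subring (Fin n → ℤ) // R.toAddSubgroup.index = r}) :
      (T.1.map (reduction n r)).comap (reduction n r) = T.1 :=
    Subring.comap_map_eq_self fun x hx =>
      mem_of_reduction_eq_zero (H := T.1.toAddSubgroup) (nsmul_mem_of_index_eq T.2) hx
  rw [← comap_map R, ← comap_map R']
  exact congrArg _ h

lemma finite_setOf_index_eq (n : ℕ) {r : ℕ} (hr : 0 < r) :
    {R : Subring (Fin n → ℤ) | R.toAddSubgroup.index = r}.Finite :=
  finite_subrings_of_index n hr

lemma subringCount_one (n : ℕ) : subringCount n 1 = 1 := by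
  rw [subringCount, Nat.card_eq_one_iff_unique]
  refine ⟨⟨fun R R' => Subtype.ext (Subring.toAddSubgroup_injective ?_)⟩,
    ⟨⟨⊤, AddSubgroup.index_eq_one.mpr rfl⟩⟩⟩
  rw [AddSubgroup.index_eq_one.mp R.2, AddSubgroup.index_eq_one.mp R'.2]

lemma subringCount_le_of_le {m : ℕ} (hnm : n ≤ m) {r : ℕ} (hr : 0 < r) :
    subringCount n r ≤ subringCount m r := by
  have := finite_subrings_of_index m hr
  let restrict : (Fin m → ℤ) →+* (Fin n → ℤ) :=
    RingHom.pi fun i => Pi.evalRingHom _ (Fin.castLE hnm i)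
  have restrict_surjective : Function.Surjective restrict := fun y =>
    ⟨Function.extend (Fin.castLE hnm) y 0,
      funext fun i => (Fin.castLE_injective hnm).extend_apply y 0 i⟩
  refine Nat.card_le_card_of_injective (fun R => ⟨R.1.comap restrict, ?_⟩) fun R R' h =>
    Subtype.ext (SetLike.coe_injective (restrict_surjective.preimage_injective
      (congrArg (fun T => (T.1 : Set (Fin m → ℤ))) h)))
  exact (AddSubgroup.index_comap_of_surjective R.1.toAddSubgroup
    (f := restrict.toAddMonoidHom) restrict_surjective).trans R.2

end Subrings

/-! ### Multiplicativity of the subring count -/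

section Multiplicativity

variable {n a b : ℕ} {R S T : Subring (Fin n → ℤ)}

lemma mem_of_coprime_nsmul_mem {G : Type*} [AddCommGroup G] {H : AddSubgroup G}
    (hab : a.Coprime b) {x : G} (ha : a • x ∈ H) (hb : b • x ∈ H) : x ∈ H := by
  obtain ⟨u, v, huv⟩ := Nat.isCoprime_iff_coprime.mpr hab
  have hx : x = u • (a • x) + v • (b • x) := by
    rw [← natCast_zsmul, ← natCast_zsmul, smul_smul, smul_smul, ← add_smul, huv, one_smul]
  rw [hx]
  exact H.add_mem (H.zsmul_mem ha _) (H.zsmul_mem hb _)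

/-- The colon `(R : b) = {x | b x ∈ R}` of a subring `R` of index `a b`; it is closed under
multiplication because `a` and `b` are coprime. It is the subring of index `a` containing `R`. -/
def colonSubring (R : Subring (Fin n → ℤ)) (hab : a.Coprime b)
    (hR : R.toAddSubgroup.index = a * b) : Subring (Fin n → ℤ) :=
  { R.toAddSubgroup.comap (nsmulAddMonoidHom (α := Fin n → ℤ) b) with
    one_mem' := R.nsmul_mem R.one_mem b
    mul_mem' := fun {x y} hx hy => by
      refine mem_of_coprime_nsmul_mem (H := R.toAddSubgroup) hab ?_ ?_
      · change a • (b • (x * y)) ∈ R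
        rw [smul_smul]
        exact nsmul_mem_of_index_eq hR _
      · change b • (b • (x * y)) ∈ R
        rw [← mul_smul_comm, ← smul_mul_assoc]
        exact R.mul_mem hx hy }

lemma le_colonSubring (hab : a.Coprime b) (hR : R.toAddSubgroup.index = a * b) :
    R ≤ colonSubring R hab hR := fun _ hx => R.nsmul_mem hx b

lemma colonSubring_inf_colonSubring (hab : a.Coprime b) (hR : R.toAddSubgroup.index = a * b)
    (hR' : R.toAddSubgroup.index = b * a) :
    colonSubring R hab hR ⊓ colonSubring R hab.symm hR' = R :=
  le_antisymm (fun _ hx => mem_of_coprime_nsmul_mem (H := R.toAddSubgroup) hab hx.2 hx.1)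
    (le_inf (le_colonSubring hab hR) (le_colonSubring hab.symm hR'))

lemma coprime_index_of_nsmul_mem {G : Type*} [AddCommGroup G] {H : AddSubgroup G}
    (hH : H.index ≠ 0) (hab : a.Coprime b) (h : ∀ x, a • x ∈ H) : H.index.Coprime b := by
  refine Nat.coprime_of_dvd fun q hq hqH hqb => ?_
  have : Fact q.Prime := ⟨hq⟩
  have : Finite (G ⧸ H) := Nat.finite_of_card_ne_zero hH
  obtain ⟨y, hy⟩ := exists_prime_addOrderOf_dvd_card' (G := G ⧸ H) q hqH
  obtain ⟨x, rfl⟩ := QuotientAddGroup.mk_surjective y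
  have ha : a • (x : G ⧸ H) = 0 := by
    rw [← QuotientAddGroup.mk_nsmul, QuotientAddGroup.eq_zero_iff]
    exact h x
  have hqa : q ∣ a := hy ▸ addOrderOf_dvd_iff_nsmul_eq_zero.mpr ha
  exact Nat.not_coprime_of_dvd_of_dvd hq.one_lt hqa hqb hab

lemma index_colonSubring_dvd (ha : 0 < a) (hb : 0 < b) (hab : a.Coprime b)
    (hR : R.toAddSubgroup.index = a * b) :
    (colonSubring R hab hR).toAddSubgroup.index ∣ a := by
  have hdvd : (colonSubring R hab hR).toAddSubgroup.index ∣ a * b :=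
    hR ▸ AddSubgroup.index_dvd_of_le (le_colonSubring hab hR)
  refine (coprime_index_of_nsmul_mem (ne_zero_of_dvd_ne_zero (by positivity) hdvd) hab
    fun x => ?_).dvd_of_dvd_mul_right hdvd
  change b • (a • x) ∈ R
  rw [smul_smul, mul_comm]
  exact nsmul_mem_of_index_eq hR x

lemma index_colonSubring (ha : 0 < a) (hb : 0 < b) (hab : a.Coprime b)
    (hR : R.toAddSubgroup.index = a * b) :
    (colonSubring R hab hR).toAddSubgroup.index = a := by
  have hR' : R.toAddSubgroup.index = b * a := by rw [hR, mul_comm]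
  have hle : a * b ≤ (colonSubring R hab hR).toAddSubgroup.index *
      (colonSubring R hab.symm hR').toAddSubgroup.index := by
    rw [← hR]
    nth_rw 1 [← colonSubring_inf_colonSubring hab hR hR']
    exact AddSubgroup.index_inf_le
  have hle₁ := Nat.le_of_dvd ha (index_colonSubring_dvd ha hb hab hR)
  have hle₂ := Nat.le_of_dvd hb (index_colonSubring_dvd hb ha hab.symm hR')
  exact le_antisymm hle₁ (Nat.le_of_mul_le_mul_right (hle.trans (Nat.mul_le_mul_left _ hle₂)) hb)

lemma index_inf_of_coprime {G : Type*} [AddGroup G] {H K : AddSubgroup G} (hH : H.index ≠ 0)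
    (hK : K.index ≠ 0) (hHK : H.index.Coprime K.index) : (H ⊓ K).index = H.index * K.index :=
  le_antisymm AddSubgroup.index_inf_le <|
    Nat.le_of_dvd (Nat.pos_of_ne_zero (AddSubgroup.index_inf_ne_zero hH hK)) <|
      hHK.mul_dvd_of_dvd_of_dvd (AddSubgroup.index_dvd_of_le inf_le_left)
        (AddSubgroup.index_dvd_of_le inf_le_right)

lemma mem_iff_nsmul_mem_inf (hab : a.Coprime b) (hS : S.toAddSubgroup.index = a)
    (hT : T.toAddSubgroup.index = b) (x : Fin n → ℤ) : x ∈ S ↔ b • x ∈ S ⊓ T :=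
  ⟨fun hx => ⟨S.nsmul_mem hx b, nsmul_mem_of_index_eq hT x⟩, fun hx =>
    mem_of_coprime_nsmul_mem (H := S.toAddSubgroup) hab (nsmul_mem_of_index_eq hS x) hx.1⟩

lemma subringCount_mul_of_coprime (n : ℕ) (ha : 0 < a) (hb : 0 < b) (hab : a.Coprime b) :
    subringCount n (a * b) = subringCount n a * subringCount n b := by
  rw [subringCount, subringCount, subringCount, ← Nat.card_prod]
  have index_inf {S T : Subring (Fin n → ℤ)} (hS : S.toAddSubgroup.index = a)
      (hT : T.toAddSubgroup.index = b) : (S ⊓ T).toAddSubgroup.index = a * b := by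
    subst hS hT
    exact index_inf_of_coprime (H := S.toAddSubgroup) (K := T.toAddSubgroup) ha.ne' hb.ne' hab
  refine (Nat.card_eq_of_bijective
    (fun ST => ⟨ST.1.1 ⊓ ST.2.1, index_inf ST.1.2 ST.2.2⟩) ⟨?_, ?_⟩).symm
  · rintro ⟨⟨S, hS⟩, ⟨T, hT⟩⟩ ⟨⟨S', hS'⟩, ⟨T', hT'⟩⟩ h
    have hinf : S ⊓ T = S' ⊓ T' := congrArg Subtype.val h
    have hSS' : S = S' := Subring.ext fun x => by
      rw [mem_iff_nsmul_mem_inf hab hS hT, mem_iff_nsmul_mem_inf hab hS' hT', hinf]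
    have hTT' : T = T' := Subring.ext fun x => by
      rw [mem_iff_nsmul_mem_inf hab.symm hT hS, mem_iff_nsmul_mem_inf hab.symm hT' hS',
        inf_comm, hinf, inf_comm]
    simp only [hSS', hTT']
  · rintro ⟨R, hR⟩
    have hR' : R.toAddSubgroup.index = b * a := by rw [hR, mul_comm]
    exact ⟨(⟨_, index_colonSubring ha hb hab hR⟩, ⟨_, index_colonSubring hb ha hab.symm hR'⟩),
      Subtype.ext (colonSubring_inf_colonSubring hab hR hR')⟩

end Multiplicativity

/-! ### Subrings of prime index -/

section PrimeIndex

variable {n p : ℕ} {R : Subring (Fin n → ℤ)}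

/-- The pairs `i < j` of coordinates, listed with the larger index first. -/
def coordPairs (n : ℕ) : Finset (Σ _ : Fin n, Fin n) := univ.sigma fun j => Iio j

lemma mem_coordPairs {t : Σ _ : Fin n, Fin n} : t ∈ coordPairs n ↔ t.2 < t.1 := by
  simp [coordPairs]

lemma card_coordPairs (n : ℕ) : #(coordPairs n) = n * (n - 1) / 2 := by
  rw [coordPairs, card_sigma, ← sum_range_id, ← Fin.sum_univ_eq_sum_range (fun i => i)]
  simp only [Fin.card_Iio]

/-- The subring of `ℤ^n` cut out by `x_i ≡ x_j (mod q)`. -/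
def congruenceSubring (q : ℕ) (i j : Fin n) : Subring (Fin n → ℤ) :=
  RingHom.eqLocus ((Int.castRingHom (ZMod q)).comp (Pi.evalRingHom _ i))
    ((Int.castRingHom (ZMod q)).comp (Pi.evalRingHom _ j))

lemma mem_congruenceSubring {q : ℕ} {i j : Fin n} {x : Fin n → ℤ} :
    x ∈ congruenceSubring q i j ↔ (q : ℤ) ∣ x j - x i :=
  ZMod.intCast_eq_intCast_iff_dvd_sub (x i) (x j) q

/-- The homomorphism `x ↦ x_i - x_j`. -/
def coordSub (i j : Fin n) : (Fin n → ℤ) →+ ℤ :=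
  Pi.evalAddMonoidHom (fun _ => ℤ) i - Pi.evalAddMonoidHom (fun _ => ℤ) j

@[simp] lemma coordSub_apply (i j : Fin n) (x : Fin n → ℤ) : coordSub i j x = x i - x j := rfl

lemma coordSub_surjective {i j : Fin n} (hij : i ≠ j) : Function.Surjective (coordSub i j) :=
  fun z => ⟨Pi.single i z, by simp [hij.symm]⟩

lemma index_congruenceSubring (q : ℕ) {i j : Fin n} (hij : i ≠ j) :
    (congruenceSubring q i j).toAddSubgroup.index = q := by
  have : (congruenceSubring q i j).toAddSubgroup =
      (AddSubgroup.zmultiples (q : ℤ)).comap (coordSub j i) := by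
    ext x
    rw [AddSubgroup.mem_comap, Int.mem_zmultiples_iff]
    exact mem_congruenceSubring
  rw [this, AddSubgroup.index_comap_of_surjective _ (coordSub_surjective hij.symm),
    Int.index_zmultiples, Int.natAbs_natCast]

lemma index_eq_one_of_single_mem (h : ∀ i, Pi.single i 1 ∈ R) : R.toAddSubgroup.index = 1 := by
  refine AddSubgroup.index_eq_one.mpr (eq_top_iff.mpr fun z _ => ?_)
  change z ∈ R
  rw [pi_eq_sum_univ' z]
  refine R.sum_mem fun i _ => R.zsmul_mem ?_ (z i)
  convert h i using 2

/-- The product over `j ≠ i` of elements of `R` separating `i` from `j` is, modulo `p`, a nonzero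
multiple of the idempotent. -/
lemma single_mem_of_forall_not_le_congruenceSubring (hp : p.Prime)
    (hpR : ∀ v : Fin n → ℤ, p • v ∈ R) {i : Fin n}
    (h : ∀ j ≠ i, ¬ R ≤ congruenceSubring p j i) : Pi.single i 1 ∈ R := by
  classical
  have hpi := Nat.prime_iff_prime_int.mp hp
  have separate (j : Fin n) : ∃ x ∈ R, x j = 0 ∧ (j ≠ i → ¬ (p : ℤ) ∣ x i) := by
    by_cases hji : j = i
    · exact ⟨0, R.zero_mem, rfl, fun h => absurd hji h⟩
    obtain ⟨x, hx, hxj⟩ := SetLike.not_le_iff_exists.mp (h j hji)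
    refine ⟨x - x j • 1, R.sub_mem hx (R.zsmul_mem R.one_mem _), by simp, fun _ hd => hxj ?_⟩
    rw [mem_congruenceSubring]
    simpa using hd
  choose x hx hxj hxi using separate
  set y : Fin n → ℤ := ∏ j ∈ univ.erase i, x j with hy
  have hyR : y ∈ R := R.prod_mem fun j _ => hx j
  have hyi : ¬ (p : ℤ) ∣ y i := by
    rw [hy, Finset.prod_apply, hpi.dvd_finsetProd_iff]
    rintro ⟨j, hj, hd⟩
    exact hxi j (mem_erase.mp hj).1 hd
  obtain ⟨u, v, huv⟩ := hpi.coprime_iff_not_dvd.mpr hyi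
  have hsingle : Pi.single i (1 : ℤ) = u • (p • (Pi.single i 1 : Fin n → ℤ)) + v • y := by
    funext l
    by_cases hl : l = i
    · subst hl
      simpa using huv.symm
    · have hyl : y l = 0 := by
        rw [hy, Finset.prod_apply]
        exact prod_eq_zero (mem_erase.mpr ⟨hl, mem_univ l⟩) (hxj l)
      simp [hl, hyl]
  rw [hsingle]
  exact R.add_mem (R.zsmul_mem (hpR _) _) (R.zsmul_mem hyR _)

lemma congruenceSubring_comm (q : ℕ) (i j : Fin n) :
    congruenceSubring q i j = congruenceSubring q j i := by
  ext x
  rw [mem_congruenceSubring, mem_congruenceSubring, dvd_sub_comm]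

lemma exists_eq_congruenceSubring (hp : p.Prime) (hR : R.toAddSubgroup.index = p) :
    ∃ i j, i < j ∧ congruenceSubring p i j = R := by
  have hle : ∃ i j, i < j ∧ R ≤ congruenceSubring p i j := by
    by_contra! hcon
    refine hp.one_lt.ne' (hR.symm.trans (index_eq_one_of_single_mem fun i => ?_))
    refine single_mem_of_forall_not_le_congruenceSubring hp
      (nsmul_mem_of_index_eq hR) fun j hji => ?_
    rcases lt_or_gt_of_ne hji with hlt | hgt
    · exact hcon j i hlt
    · rw [congruenceSubring_comm]
      exact hcon i j hgt
  obtain ⟨i, j, hij, hRE⟩ := hle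
  refine ⟨i, j, hij, le_antisymm ?_ hRE⟩
  have hrel : R.toAddSubgroup.relIndex (congruenceSubring p i j).toAddSubgroup * p = p := by
    have := AddSubgroup.relIndex_mul_index (H := R.toAddSubgroup)
      (K := (congruenceSubring p i j).toAddSubgroup) hRE
    rwa [index_congruenceSubring p hij.ne, hR] at this
  exact AddSubgroup.relIndex_eq_one.mp ((Nat.mul_eq_right hp.ne_zero).mp hrel)

lemma eq_or_eq_of_congruenceSubring_le (hp : p.Prime) {i j i' j' l : Fin n} (hij' : i' ≠ j')
    (h : congruenceSubring p i j ≤ congruenceSubring p i' j') (hl : l = i' ∨ l = j') :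
    l = i ∨ l = j := by
  by_contra! hne
  have hmem : (Pi.single l 1 : Fin n → ℤ) ∈ congruenceSubring p i j := by
    simp [mem_congruenceSubring, hne.1.symm, hne.2.symm]
  have hdvd := mem_congruenceSubring.mp (h hmem)
  have hp1 : ¬ (p : ℤ) ∣ 1 := (Nat.prime_iff_prime_int.mp hp).not_dvd_one
  rcases hl with rfl | rfl
  · exact hp1 (by simpa [hij'.symm] using hdvd)
  · exact hp1 (by simpa [hij'] using hdvd)

lemma subringCount_prime (n : ℕ) (hp : p.Prime) : subringCount n p = n * (n - 1) / 2 := by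
  rw [← card_coordPairs, subringCount, ← Nat.card_eq_finsetCard]
  refine (Nat.card_eq_of_bijective (fun t => ⟨congruenceSubring p t.1.2 t.1.1,
    index_congruenceSubring p (mem_coordPairs.mp t.2).ne⟩) ⟨?_, ?_⟩).symm
  · rintro ⟨⟨j, i⟩, hij⟩ ⟨⟨j', i'⟩, hij'⟩ h
    rw [mem_coordPairs] at hij hij'
    have hle := (congrArg Subtype.val h).le
    have hi' := eq_or_eq_of_congruenceSubring_le hp hij'.ne hle (.inl rfl)
    have hj' := eq_or_eq_of_congruenceSubring_le hp hij'.ne hle (.inr rfl)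
    dsimp only at hij hij' hi' hj'
    obtain ⟨rfl, rfl⟩ : i' = i ∧ j' = j := by omega
    rfl
  · rintro ⟨R, hR⟩
    obtain ⟨i, j, hij, rfl⟩ := exists_eq_congruenceSubring hp hR
    exact ⟨⟨⟨j, i⟩, mem_coordPairs.mpr hij⟩, rfl⟩

end PrimeIndex

/-! ### Pivots and contact orders -/

section Pivots

variable {n : ℕ}

/-- The subgroup of vectors whose first `m` coordinates vanish. -/
def tailSubgroup (n m : ℕ) : AddSubgroup (Fin n → ℤ) :=
  AddSubgroup.pi {l | (l : ℕ) < m} fun _ => ⊥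

lemma mem_tailSubgroup {m : ℕ} {x : Fin n → ℤ} :
    x ∈ tailSubgroup n m ↔ ∀ l : Fin n, (l : ℕ) < m → x l = 0 := Iff.rfl

/-- The leading coefficients at `j` of the elements of `H`; the generators of these groups are the
diagonal entries of the Hermite normal form of `H`. -/
def pivotSubgroup (H : AddSubgroup (Fin n → ℤ)) (j : Fin n) : AddSubgroup ℤ :=
  (H ⊓ tailSubgroup n j).map (Pi.evalAddMonoidHom (fun _ => ℤ) j)

lemma mem_pivotSubgroup {H : AddSubgroup (Fin n → ℤ)} {j : Fin n} {c : ℤ} :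
    c ∈ pivotSubgroup H j ↔ ∃ h ∈ H, (∀ l < j, h l = 0) ∧ h j = c := by
  simp only [pivotSubgroup, AddSubgroup.mem_map, AddSubgroup.mem_inf, mem_tailSubgroup,
    and_assoc, Pi.evalAddMonoidHom_apply, Fin.lt_def]

/-- Forgetting the last coordinate. -/
def initHom (n : ℕ) : (Fin (n + 1) → ℤ) →+* (Fin n → ℤ) :=
  RingHom.pi fun i => Pi.evalRingHom (fun _ => ℤ) i.castSucc

@[simp] lemma initHom_apply (x : Fin (n + 1) → ℤ) (i : Fin n) : initHom n x i = x i.castSucc := rfl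

lemma initHom_surjective (n : ℕ) : Function.Surjective (initHom n) := fun y =>
  ⟨Fin.snoc y 0, funext fun i => Fin.snoc_castSucc (α := fun _ => ℤ) 0 y i⟩

lemma eq_single_of_initHom_eq_zero {x : Fin (n + 1) → ℤ} (hx : initHom n x = 0) :
    x = Pi.single (Fin.last n) (x (Fin.last n)) := by
  funext i
  refine Fin.lastCases (by simp) (fun i => ?_) i
  rw [Pi.single_eq_of_ne (Fin.castSucc_lt_last i).ne]
  exact congrFun hx i

lemma pivotSubgroup_map_initHom (H : AddSubgroup (Fin (n + 1) → ℤ)) (j : Fin n) :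
    pivotSubgroup (H.map (initHom n).toAddMonoidHom) j = pivotSubgroup H j.castSucc := by
  ext c
  simp only [mem_pivotSubgroup, AddSubgroup.mem_map]
  constructor
  · rintro ⟨_, ⟨h, hh, rfl⟩, hlt, hj⟩
    refine ⟨h, hh, fun l hl => ?_, hj⟩
    obtain ⟨l, rfl⟩ := Fin.exists_castSucc_eq.mpr (hl.trans_le (Fin.le_last _)).ne
    exact hlt l (Fin.castSucc_lt_castSucc_iff.mp hl)
  · rintro ⟨h, hh, hlt, hj⟩
    exact ⟨_, ⟨h, hh, rfl⟩, fun l hl => hlt _ (Fin.castSucc_lt_castSucc_iff.mpr hl), hj⟩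

lemma pivotSubgroup_last (H : AddSubgroup (Fin (n + 1) → ℤ)) :
    pivotSubgroup H (Fin.last n) =
      H.comap (AddMonoidHom.single (fun _ : Fin (n + 1) => ℤ) (Fin.last n)) := by
  ext c
  rw [mem_pivotSubgroup, AddSubgroup.mem_comap]
  constructor
  · rintro ⟨h, hh, hlt, rfl⟩
    have hinit : initHom n h = 0 := funext fun i => hlt _ (Fin.castSucc_lt_last i)
    rw [eq_single_of_initHom_eq_zero hinit] at hh
    exact hh
  · exact fun hc => ⟨_, hc, fun l hl => by simp [hl.ne], by simp⟩

lemma index_eq_index_init_mul (H : AddSubgroup (Fin (n + 1) → ℤ)) :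
    H.index = (H.map (initHom n).toAddMonoidHom).index * (pivotSubgroup H (Fin.last n)).index := by
  have ker_eq : (initHom n).toAddMonoidHom.ker =
      (AddMonoidHom.single (fun _ : Fin (n + 1) => ℤ) (Fin.last n)).range := by
    ext x
    rw [AddMonoidHom.mem_range, AddMonoidHom.mem_ker]
    constructor
    · exact fun hx => ⟨_, (eq_single_of_initHom_eq_zero hx).symm⟩
    · rintro ⟨c, rfl⟩
      exact funext fun i => by simp
  have range_eq : (initHom n).toAddMonoidHom.range = ⊤ :=
    AddMonoidHom.range_eq_top.mpr (initHom_surjective n)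
  rw [pivotSubgroup_last, AddSubgroup.index_comap, ← ker_eq, AddSubgroup.index_map, range_eq,
    AddSubgroup.index_top, mul_one, mul_comm, ← AddSubgroup.relIndex_sup_left,
    sup_comm, AddSubgroup.relIndex_mul_index le_sup_right]

lemma index_eq_prod_index_pivotSubgroup (H : AddSubgroup (Fin n → ℤ)) :
    H.index = ∏ j, (pivotSubgroup H j).index := by
  induction n with
  | zero => simp [Subsingleton.elim H ⊤]
  | succ n ih =>
    rw [index_eq_index_init_mul, ih, Fin.prod_univ_castSucc]
    simp only [pivotSubgroup_map_initHom]

end Pivots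

section Invariants

variable {n p : ℕ} {a : Fin n → ℕ} {d : Fin n → Fin n → ℕ} {R : Subring (Fin n → ℤ)}

/-- The `p`-power invariants of a subring of `p`-power index: its pivots are `p ^ a j`, and the
values `x_i - x_j` on it are exactly the multiples of `p ^ d i j` (the contact order of the
coordinates `i` and `j`). The diagonal of `d` is irrelevant. -/
structure HasInvariants (p : ℕ) (a : Fin n → ℕ) (d : Fin n → Fin n → ℕ)
    (R : Subring (Fin n → ℤ)) : Prop where
  pivot (j : Fin n) : pivotSubgroup R.toAddSubgroup j = .zmultiples ((p : ℤ) ^ a j)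
  contact {i j : Fin n} (hij : i ≠ j) :
    R.toAddSubgroup.map (coordSub i j) = .zmultiples ((p : ℤ) ^ d i j)

/-- The numerical relations satisfied by the invariants of a subring. -/
structure Admissible (a : Fin n → ℕ) (d : Fin n → Fin n → ℕ) : Prop where
  symm {i j : Fin n} (hij : i ≠ j) : d i j = d j i
  ultrametric {i j l : Fin n} (hij : i ≠ j) (hjl : j ≠ l) (hil : i ≠ l) :
    min (d i j) (d j l) ≤ d i l
  contact_le_pivot {i j : Fin n} (hij : i < j) : d i j ≤ a j
  pivot_le (j : Fin n) : a j ≤ ∑ i ∈ Iio j, d i j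

lemma exists_eq_zmultiples_pow (hp : p.Prime) {A : AddSubgroup ℤ} {k : ℕ} (hA : A.index ∣ p ^ k) :
    ∃ e ≤ k, A = .zmultiples ((p : ℤ) ^ e) := by
  obtain ⟨e, hek, he⟩ := (Nat.dvd_prime_pow hp).mp hA
  obtain ⟨c, rfl⟩ := Int.subgroup_cyclic A
  refine ⟨e, hek, ?_⟩
  rw [← AddSubgroup.zmultiples_eq_closure] at he ⊢
  rw [Int.index_zmultiples] at he
  ext z
  rw [Int.mem_zmultiples_iff, Int.mem_zmultiples_iff, ← Int.natAbs_dvd, he, Nat.cast_pow]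

lemma exists_hasInvariants (hp : p.Prime) {k : ℕ} (hR : R.toAddSubgroup.index = p ^ k) :
    ∃ a d, (∀ j, a j ≤ k) ∧ (∀ i j, d i j ≤ k) ∧ HasInvariants p a d R := by
  have pivot (j : Fin n) : ∃ e ≤ k, pivotSubgroup R.toAddSubgroup j = .zmultiples ((p : ℤ) ^ e) :=
    exists_eq_zmultiples_pow hp (hR ▸ index_eq_prod_index_pivotSubgroup R.toAddSubgroup ▸
      dvd_prod_of_mem _ (mem_univ j))
  have contact (i j : Fin n) : ∃ e ≤ k,
      i ≠ j → R.toAddSubgroup.map (coordSub i j) = .zmultiples ((p : ℤ) ^ e) := by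
    by_cases hij : i = j
    · exact ⟨0, k.zero_le, fun h => absurd hij h⟩
    · obtain ⟨e, hek, he⟩ := exists_eq_zmultiples_pow (k := k) hp
        (hR ▸ AddSubgroup.index_map_dvd R.toAddSubgroup (coordSub_surjective hij))
      exact ⟨e, hek, fun _ => he⟩
  choose a hak ha using pivot
  choose d hdk hd using contact
  exact ⟨a, d, hak, hdk, ha, fun {i j} hij => hd i j hij⟩

lemma le_of_pow_dvd_pow {p : ℕ} (hp : p.Prime) {k l : ℕ} (h : (p : ℤ) ^ k ∣ (p : ℤ) ^ l) : k ≤ l :=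
  (pow_dvd_pow_iff (by exact_mod_cast hp.ne_zero)
    (Nat.prime_iff_prime_int.mp hp).not_isUnit).mp h

namespace HasInvariants

lemma index_eq (hR : HasInvariants p a d R) : R.toAddSubgroup.index = p ^ ∑ j, a j := by
  rw [index_eq_prod_index_pivotSubgroup, ← prod_pow_eq_pow_sum]
  exact prod_congr rfl fun j _ => by
    rw [hR.pivot, Int.index_zmultiples, Int.natAbs_pow, Int.natAbs_natCast]

lemma exists_pivot (hR : HasInvariants p a d R) (j : Fin n) :
    ∃ h ∈ R, (∀ l < j, h l = 0) ∧ h j = (p : ℤ) ^ a j :=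
  mem_pivotSubgroup.mp (hR.pivot j ▸ AddSubgroup.mem_zmultiples _)

lemma pow_pivot_dvd (hR : HasInvariants p a d R) {j : Fin n} {h : Fin n → ℤ} (hh : h ∈ R)
    (hlt : ∀ l < j, h l = 0) : (p : ℤ) ^ a j ∣ h j := by
  rw [← Int.mem_zmultiples_iff, ← hR.pivot j]
  exact mem_pivotSubgroup.mpr ⟨h, hh, hlt, rfl⟩

lemma exists_contact (hR : HasInvariants p a d R) {i j : Fin n} (hij : i ≠ j) :
    ∃ x ∈ R, x i - x j = (p : ℤ) ^ d i j :=
  AddSubgroup.mem_map.mp (hR.contact hij ▸ AddSubgroup.mem_zmultiples ((p : ℤ) ^ d i j))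

lemma pow_contact_dvd (hR : HasInvariants p a d R) {i j : Fin n} (hij : i ≠ j) {x : Fin n → ℤ}
    (hx : x ∈ R) : (p : ℤ) ^ d i j ∣ x i - x j := by
  rw [← Int.mem_zmultiples_iff, ← hR.contact hij]
  exact ⟨x, hx, rfl⟩

lemma map_initHom {a : Fin (n + 1) → ℕ} {d : Fin (n + 1) → Fin (n + 1) → ℕ}
    {R : Subring (Fin (n + 1) → ℤ)} (hR : HasInvariants p a d R) :
    HasInvariants p (fun j => a j.castSucc) (fun i j => d i.castSucc j.castSucc)
      (R.map (initHom n)) where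
  pivot j := (pivotSubgroup_map_initHom R.toAddSubgroup j).trans (hR.pivot j.castSucc)
  contact {i j} hij := (AddSubgroup.map_map R.toAddSubgroup (coordSub i j)
    (initHom n).toAddMonoidHom).trans (hR.contact (Fin.castSucc_injective n |>.ne hij))

lemma pivot_le_sum_contact (hR : HasInvariants p a d R) (hp : p.Prime) (j : Fin n) :
    a j ≤ ∑ i ∈ Iio j, d i j := by
  have separate (i : Fin n) : ∃ x ∈ R, x i = 0 ∧ (i ≠ j → x j = (p : ℤ) ^ d i j) := by
    by_cases hij : i = j
    · exact ⟨0, R.zero_mem, rfl, fun h => absurd hij h⟩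
    obtain ⟨x, hx, hxij⟩ := hR.exists_contact hij
    exact ⟨x i • 1 - x, R.sub_mem (R.zsmul_mem R.one_mem _) hx, by simp, fun _ => by simp [hxij]⟩
  choose x hxR hxi hxj using separate
  have hdvd : (p : ℤ) ^ a j ∣ (∏ i ∈ Iio j, x i) j :=
    hR.pow_pivot_dvd (R.prod_mem fun i _ => hxR i) fun l hl => by
      rw [Finset.prod_apply]
      exact prod_eq_zero (mem_Iio.mpr hl) (hxi l)
  rw [Finset.prod_apply, prod_congr rfl fun i hi => hxj i (mem_Iio.mp hi).ne,
    prod_pow_eq_pow_sum] at hdvd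
  exact le_of_pow_dvd_pow hp hdvd

lemma admissible (hR : HasInvariants p a d R) (hp : p.Prime) : Admissible a d := by
  have contact_le {i j : Fin n} (hij : i ≠ j) : d i j ≤ d j i := by
    obtain ⟨x, hx, hxji⟩ := hR.exists_contact hij.symm
    exact le_of_pow_dvd_pow hp (hxji ▸ (dvd_sub_comm.mp (hR.pow_contact_dvd hij hx)))
  refine ⟨fun hij => (contact_le hij).antisymm (contact_le hij.symm), ?_, ?_,
    hR.pivot_le_sum_contact hp⟩
  · intro i j l hij hjl hil
    obtain ⟨x, hx, hxil⟩ := hR.exists_contact hil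
    refine le_of_pow_dvd_pow hp ?_
    rw [← hxil, ← sub_add_sub_cancel (x i) (x j) (x l)]
    exact dvd_add ((pow_dvd_pow _ (min_le_left _ _)).trans (hR.pow_contact_dvd hij hx))
      ((pow_dvd_pow _ (min_le_right _ _)).trans (hR.pow_contact_dvd hjl hx))
  · intro i j hij
    obtain ⟨h, hh, hlt, hj⟩ := hR.exists_pivot j
    have := hR.pow_contact_dvd hij.ne hh
    rw [hlt i hij, hj, zero_sub, dvd_neg] at this
    exact le_of_pow_dvd_pow hp this

end HasInvariants

end Invariants

/-! ### Subrings as graphs of ring homomorphisms -/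

section Graph

variable {n q : ℕ} {S : Subring (Fin n → ℤ)}

/-- The subring `{(r, t) | r ∈ S, φ r = t}` of `ℤ^(n+1)`. -/
def graphSubring (φ : S →+* ZMod q) : Subring (Fin (n + 1) → ℤ) :=
  (RingHom.eqLocus
    (φ.comp ((initHom n).restrict (S.comap (initHom n)) S fun _ h => h))
    ((Int.castRingHom (ZMod q)).comp ((Pi.evalRingHom (fun _ => ℤ) (Fin.last n)).comp
      (S.comap (initHom n)).subtype))).map (S.comap (initHom n)).subtype

lemma mem_graphSubring {φ : S →+* ZMod q} {x : Fin (n + 1) → ℤ} :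
    x ∈ graphSubring φ ↔
      ∃ h : initHom n x ∈ S, φ ⟨initHom n x, h⟩ = (x (Fin.last n) : ZMod q) := by
  constructor
  · rintro ⟨y, hy, rfl⟩
    exact ⟨y.2, hy⟩
  · rintro ⟨h, hx⟩
    exact ⟨⟨x, h⟩, hx, rfl⟩

lemma snoc_mem_graphSubring {φ : S →+* ZMod q} {r : S} {t : ℤ} (ht : φ r = t) :
    (Fin.snoc r.1 t : Fin (n + 1) → ℤ) ∈ graphSubring φ := by
  have hinit : initHom n (Fin.snoc r.1 t) = r.1 :=
    funext fun i => Fin.snoc_castSucc (α := fun _ => ℤ) t r.1 i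
  refine mem_graphSubring.mpr ⟨hinit.symm ▸ r.2, ?_⟩
  rw [Fin.snoc_last, ← ht]
  exact congrArg φ (Subtype.ext hinit)

lemma exists_eq_graphSubring {R : Subring (Fin (n + 1) → ℤ)} (hS : R.map (initHom n) = S)
    (hq : pivotSubgroup R.toAddSubgroup (Fin.last n) = .zmultiples (q : ℤ)) :
    ∃ φ : S →+* ZMod q, graphSubring φ = R := by
  subst hS
  have mem_of_dvd {c : ℤ} (hc : (q : ℤ) ∣ c) : Pi.single (Fin.last n) c ∈ R := by
    rw [← Int.mem_zmultiples_iff, ← hq, pivotSubgroup_last] at hc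
    exact hc
  let toInit : R →+* R.map (initHom n) :=
    (initHom n).restrict R (R.map (initHom n)) fun x hx => ⟨x, hx, rfl⟩
  have toInit_surjective : Function.Surjective toInit := by
    rintro ⟨_, x, hx, rfl⟩
    exact ⟨⟨x, hx⟩, rfl⟩
  let lastMod : R →+* ZMod q :=
    (Int.castRingHom (ZMod q)).comp ((Pi.evalRingHom (fun _ => ℤ) (Fin.last n)).comp R.subtype)
  have ker_le : RingHom.ker toInit ≤ RingHom.ker lastMod := fun x hx => by
    have hinit : initHom n x.1 = 0 := congrArg Subtype.val hx
    refine (ZMod.intCast_zmod_eq_zero_iff_dvd _ q).mpr ?_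
    rw [← Int.mem_zmultiples_iff, ← hq]
    exact mem_pivotSubgroup.mpr ⟨x, x.2, fun l hl => by
      obtain ⟨l, rfl⟩ := Fin.exists_castSucc_eq.mpr hl.ne
      exact congrFun hinit l, rfl⟩
  set φ := RingHom.liftOfSurjective toInit toInit_surjective ⟨lastMod, ker_le⟩
  have φ_toInit (x : R) : φ (toInit x) = lastMod x :=
    RingHom.liftOfRightInverse_comp_apply _ _ _ ⟨lastMod, ker_le⟩ x
  refine ⟨φ, Subring.ext fun x => mem_graphSubring.trans ⟨?_, fun hx => ?_⟩⟩
  · rintro ⟨⟨y, hy, hyx⟩, hφ⟩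
    have hlast : (y (Fin.last n) : ZMod q) = x (Fin.last n) :=
      (φ_toInit ⟨y, hy⟩).symm.trans ((congrArg φ (Subtype.ext hyx)).trans hφ)
    have hinit : initHom n (x - y) = 0 := by rw [map_sub, ← hyx]; exact sub_self _
    rw [← add_sub_cancel y x, eq_single_of_initHom_eq_zero hinit]
    exact R.add_mem hy (mem_of_dvd ((ZMod.intCast_eq_intCast_iff_dvd_sub _ _ q).mp hlast))
  · exact ⟨⟨x, hx, rfl⟩, φ_toInit ⟨x, hx⟩⟩

lemma exists_finset_image_graphSubring [DecidableEq (Subring (Fin (n + 1) → ℤ))]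
    {A : Finset (Subring (Fin (n + 1) → ℤ))}
    (hS : ∀ R ∈ A, R.map (initHom n) = S)
    (hq : ∀ R ∈ A, pivotSubgroup R.toAddSubgroup (Fin.last n) = .zmultiples (q : ℤ)) :
    ∃ Φ : Finset (S →+* ZMod q), Φ.image graphSubring = A := by
  obtain ⟨Φ, -, hΦ⟩ := subset_set_image_iff.mp fun R hR =>
    (Set.image_univ (f := graphSubring (S := S) (q := q))) ▸
      Set.mem_range.mpr (exists_eq_graphSubring (hS R hR) (hq R hR))
  exact ⟨Φ, hΦ⟩

end Graph

/-! ### Counting ring homomorphisms along the pivots -/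

section CountHoms

variable {n p : ℕ} {a : Fin n → ℕ} {d : Fin n → Fin n → ℕ} {S : Subring (Fin n → ℤ)}

lemma card_le_prod_of_forall_exists_finset {M : Type*} (N : Fin n → ℕ)
    (Φ : Finset (Fin n → M))
    (h : ∀ i, ∀ f ∈ Φ, ∃ T : Finset M, #T ≤ N i ∧ ∀ g ∈ Φ, (∀ l, i < l → g l = f l) → g i ∈ T) :
    #Φ ≤ ∏ i, N i := by
  classical
  induction n with
  | zero => simpa using card_le_one.mpr fun f _ g _ => Subsingleton.elim f g
  | succ n ih =>
    rw [Fin.prod_univ_succ]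
    have hfiber : #Φ ≤ N 0 * #(Φ.image Fin.tail) := by
      refine card_le_mul_card_image Φ _ fun t ht => ?_
      obtain ⟨f, hf, rfl⟩ := mem_image.mp ht
      obtain ⟨T, hT, hmem⟩ := h 0 f hf
      refine (card_le_card_of_injOn (fun g => g 0) (fun g hg => ?_) ?_).trans hT
      · have hg := mem_filter.mp hg
        refine hmem g hg.1 fun l hl => ?_
        obtain ⟨l, rfl⟩ := Fin.exists_succ_eq.mpr hl.ne'
        exact congrFun hg.2 l
      · intro g hg g' hg' h0
        rw [← Fin.cons_self_tail g, ← Fin.cons_self_tail g', (mem_filter.mp hg).2,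
          (mem_filter.mp hg').2]
        exact congrArg (fun c => (Fin.cons c (Fin.tail f) : Fin (n + 1) → M)) h0
    refine hfiber.trans (Nat.mul_le_mul_left _ (ih _ _ fun i t ht => ?_))
    obtain ⟨f, hf, rfl⟩ := mem_image.mp ht
    obtain ⟨T, hT, hmem⟩ := h i.succ f hf
    refine ⟨T, hT, forall_mem_image.mpr fun g hg hgf => hmem g hg fun l hl => ?_⟩
    obtain ⟨l, rfl⟩ := Fin.exists_succ_eq.mpr (i.succ_pos.trans hl).ne'
    exact hgf l (Fin.succ_lt_succ_iff.mp hl)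

lemma eqOn_tail_of_eq_on_pivots {M : Type*} [AddCommGroup M] {H : AddSubgroup (Fin n → ℤ)}
    {f g : H →+ M} {h : Fin n → H} (hlt : ∀ i, ∀ l < i, (h i).1 l = 0)
    (hdvd : ∀ i, ∀ r : H, (∀ l < i, r.1 l = 0) → (h i).1 i ∣ r.1 i) {m : ℕ} (hm : m ≤ n)
    (heq : ∀ i : Fin n, m ≤ i → f (h i) = g (h i)) {r : H}
    (hr : ∀ l : Fin n, (l : ℕ) < m → r.1 l = 0) : f r = g r := by
  induction hm using Nat.decreasingInduction generalizing r with
  | self =>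
    have : r = 0 := Subtype.ext (funext fun l => hr l l.2)
    rw [this, map_zero, map_zero]
  | of_succ m hmn ih =>
    obtain ⟨c, hc⟩ := hdvd ⟨m, hmn⟩ r hr
    have hsub : f (r - c • h ⟨m, hmn⟩) = g (r - c • h ⟨m, hmn⟩) := by
      refine ih (fun i hi => heq i (by omega)) fun l hl => ?_
      change r.1 l - c • (h ⟨m, hmn⟩).1 l = 0
      rcases (Nat.lt_succ_iff.mp hl).lt_or_eq with hlm | rfl
      · rw [hr l hlm, hlt ⟨m, hmn⟩ l hlm, smul_zero, sub_zero]
      · rw [hc, smul_eq_mul, mul_comm, sub_self]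
    rwa [map_sub, map_sub, map_zsmul, map_zsmul, heq ⟨m, hmn⟩ le_rfl, sub_left_inj] at hsub

lemma card_filter_pow_mul_sub_eq_zero_le (hp : p.Prime) {q : ℕ} [NeZero q] (m : ℕ) (c : ZMod q) :
    #{z : ZMod q | (p : ZMod q) ^ m * (z - c) = 0} ≤ p ^ m := by
  refine (card_le_card_of_injOn (fun z => z - c) (fun z hz => ?_)
    sub_left_injective.injOn).trans
      (IsAddCyclic.card_nsmul_eq_zero_le (α := ZMod q) (pow_pos hp.pos m))
  simpa [nsmul_eq_mul] using hz

/-- Since the pivots generate `S`, a homomorphism is determined by its values on them; running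
through the pivots from the last to the first, the hypothesis leaves at most `p ^ m i` values at
the `i`-th one. -/
lemma card_ringHom_le (hp : p.Prime) (hS : HasInvariants p a d S) {α : ℕ}
    (Φ : Finset (S →+* ZMod (p ^ α))) (m : Fin n → ℕ)
    (hΦ : ∀ i, ∀ φ ∈ Φ, ∀ ψ ∈ Φ, (∀ r : S, (∀ l ≤ i, r.1 l = 0) → φ r = ψ r) →
      ∀ r : S, (∀ l < i, r.1 l = 0) → (p : ZMod (p ^ α)) ^ m i * (φ r - ψ r) = 0) :
    #Φ ≤ p ^ ∑ i, m i := by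
  classical
  have : NeZero (p ^ α) := ⟨(pow_pos hp.pos α).ne'⟩
  choose h hmem hlt hpiv using hS.exists_pivot
  let g (i : Fin n) : S := ⟨h i, hmem i⟩
  have hdvd (i : Fin n) (r : S) (hr : ∀ l < i, r.1 l = 0) : (g i).1 i ∣ r.1 i :=
    (hpiv i).dvd.trans (hS.pow_pivot_dvd r.2 hr)
  have eq_of_eq {φ ψ : S →+* ZMod (p ^ α)} {k : ℕ} (hk : k ≤ n)
      (heq : ∀ i : Fin n, k ≤ i → φ (g i) = ψ (g i)) (r : S)
      (hr : ∀ l : Fin n, (l : ℕ) < k → r.1 l = 0) : φ r = ψ r :=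
    eqOn_tail_of_eq_on_pivots (H := S.toAddSubgroup) (f := φ.toAddMonoidHom)
      (g := ψ.toAddMonoidHom) (h := g) hlt hdvd hk heq hr
  have eval_injective : Function.Injective fun (φ : S →+* ZMod (p ^ α)) i => φ (g i) :=
    fun φ ψ heq => RingHom.ext fun r =>
      eq_of_eq n.zero_le (fun i _ => congrFun heq i) r fun l hl => absurd hl l.1.not_lt_zero
  rw [← card_image_of_injective Φ eval_injective, ← prod_pow_eq_pow_sum]
  refine card_le_prod_of_forall_exists_finset _ _ fun i => forall_mem_image.mpr fun φ hφ => ?_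
  refine ⟨_, card_filter_pow_mul_sub_eq_zero_le hp (m i) (φ (g i)),
    forall_mem_image.mpr fun ψ hψ heq => mem_filter.mpr ⟨mem_univ _, ?_⟩⟩
  refine hΦ i ψ hψ φ hφ (fun r hr => ?_) (g i) (hlt i)
  exact eq_of_eq (k := i + 1) i.2 (fun l hl => heq l (Fin.lt_def.mpr hl)) r
    fun l hl => hr l (Fin.le_def.mpr (Nat.lt_succ_iff.mp hl))

end CountHoms

/-! ### Constraints on two homomorphisms agreeing below a pivot -/

section Constraints

variable {n q : ℕ} {S : Subring (Fin n → ℤ)} {φ ψ : S →+* ZMod q} {i : Fin n} {r ξ : S} {c : ℤ}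

lemma sub_mul_eq_zero_of_agree (hagree : ∀ r : S, (∀ l ≤ i, r.1 l = 0) → φ r = ψ r)
    (hr : ∀ l < i, r.1 l = 0) (hφ : φ ξ = c) (hψ : ψ ξ = c) :
    ((ξ.1 i - c : ℤ) : ZMod q) * (φ r - ψ r) = 0 := by
  have h := hagree (((ξ.1 i : ℤ) - ξ) * r) fun l hl => by
    change (ξ.1 i - ξ.1 l) * r.1 l = 0
    rcases hl.lt_or_eq with hlt | rfl
    · rw [hr l hlt, mul_zero]
    · rw [sub_self, zero_mul]
  simp only [map_mul, map_sub, map_intCast, hφ, hψ] at h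
  rw [mul_sub, Int.cast_sub, h, sub_self]

lemma coe_prod_sub_apply (ξ : S) (s : Finset (Fin n)) (l : Fin n) :
    (∏ k ∈ s, ((ξ.1 k : S) - ξ)).1 l = ∏ k ∈ s, (ξ.1 k - ξ.1 l) := by
  rw [← S.subtype_apply, map_prod, Finset.prod_apply]
  rfl

lemma HasInvariants.pow_pivot_dvd_prod_sub {p : ℕ} {a : Fin n → ℕ} {d : Fin n → Fin n → ℕ}
    (hS : HasInvariants p a d S) (ξ : S) (i : Fin n) :
    (p : ℤ) ^ a i ∣ ∏ l ∈ Iio i, (ξ.1 l - ξ.1 i) := by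
  rw [← coe_prod_sub_apply]
  refine hS.pow_pivot_dvd (Subtype.prop _) fun l hl => ?_
  rw [coe_prod_sub_apply]
  exact prod_eq_zero (mem_Iio.mpr hl) (sub_self _)

lemma mul_eq_zero_of_agree_of_prod_eq (hagree : ∀ r : S, (∀ l ≤ i, r.1 l = 0) → φ r = ψ r)
    (hr : ∀ l < i, r.1 l = 0) (hφ : φ ξ = c) (hψ : ψ ξ = c) {b u : ℤ} (hbr : b ∣ r.1 i)
    (hprod : ∏ l ∈ Iio i, (ξ.1 l - ξ.1 i) = b * u) : (u : ZMod q) * (φ r - ψ r) = 0 := by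
  obtain ⟨t, ht⟩ := hbr
  have h := hagree ((u : ℤ) * r - (t : ℤ) * ∏ l ∈ Iio i, ((ξ.1 l : ℤ) - ξ)) fun l hl => by
    change u * r.1 l - t * (∏ l ∈ Iio i, ((ξ.1 l : S) - ξ)).1 l = 0
    rw [coe_prod_sub_apply]
    rcases hl.lt_or_eq with hlt | rfl
    · rw [hr l hlt, prod_eq_zero (mem_Iio.mpr hlt) (sub_self _), mul_zero, mul_zero, sub_zero]
    · rw [hprod, ht]
      ring
  simp only [map_mul, map_sub, map_prod, map_intCast, hφ, hψ, sub_left_inj] at h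
  rw [mul_sub, h, sub_self]

lemma pow_sub_mul_eq_zero_of_contact {p α : ℕ} {a : Fin (n + 1) → ℕ}
    {d : Fin (n + 1) → Fin (n + 1) → ℕ} {φ ψ : S →+* ZMod (p ^ α)}
    (hφ : HasInvariants p a d (graphSubring φ)) (hψ : HasInvariants p a d (graphSubring ψ))
    (hdα : d i.castSucc (Fin.last n) ≤ α) (r : S) :
    (p : ZMod (p ^ α)) ^ (α - d i.castSucc (Fin.last n)) * (φ r - ψ r) = 0 := by
  have dvd {φ : S →+* ZMod (p ^ α)} (hφ : HasInvariants p a d (graphSubring φ)) {t : ℤ}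
      (ht : φ r = t) : (p : ℤ) ^ d i.castSucc (Fin.last n) ∣ r.1 i - t := by
    simpa [Fin.snoc_castSucc (α := fun _ => ℤ)] using
      hφ.pow_contact_dvd (Fin.castSucc_lt_last i).ne (snoc_mem_graphSubring ht)
  obtain ⟨s, hs⟩ := ZMod.intCast_surjective (φ r)
  obtain ⟨t, ht⟩ := ZMod.intCast_surjective (ψ r)
  obtain ⟨e, he⟩ := dvd_sub (dvd hψ ht.symm) (dvd hφ hs.symm)
  rw [sub_sub_sub_cancel_left] at he
  rw [← hs, ← ht, ← Int.cast_sub, he, Int.cast_mul, Int.cast_pow, Int.cast_natCast, ← mul_assoc,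
    ← pow_add, Nat.sub_add_cancel hdα, ← Nat.cast_pow, ZMod.natCast_self, zero_mul]

lemma pow_mul_eq_zero_of_emultiplicity_le {p α : ℕ} (hp : p.Prime) {y : ℤ} {m : ℕ}
    (hy : emultiplicity (p : ℤ) y ≤ m) {z : ZMod (p ^ α)} (hyz : (y : ZMod (p ^ α)) * z = 0) :
    (p : ZMod (p ^ α)) ^ m * z = 0 := by
  have hfin : FiniteMultiplicity (p : ℤ) y :=
    finiteMultiplicity_iff_emultiplicity_ne_top.mpr (ne_top_of_le_ne_top (by simp) hy)
  obtain ⟨u, hyu, hu⟩ := hfin.exists_eq_pow_mul_and_not_dvd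
  have hm : multiplicity (p : ℤ) y ≤ m := by
    rwa [hfin.emultiplicity_eq_multiplicity, Nat.cast_le] at hy
  obtain ⟨t, rfl⟩ := ZMod.intCast_surjective z
  have hdvd : (p : ℤ) ^ α ∣ u * (p ^ multiplicity (p : ℤ) y * t) := by
    rw [← Int.cast_mul, ZMod.intCast_zmod_eq_zero_iff_dvd, Nat.cast_pow, hyu] at hyz
    rwa [mul_left_comm, ← mul_assoc]
  have hcop : IsCoprime ((p : ℤ) ^ α) u :=
    ((Nat.prime_iff_prime_int.mp hp).coprime_iff_not_dvd.mpr hu).pow_left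
  have hdvd' : ((p ^ α : ℕ) : ℤ) ∣ p ^ m * t := by
    rw [Nat.cast_pow]
    exact (hcop.dvd_of_dvd_mul_left hdvd).trans (mul_dvd_mul_right (pow_dvd_pow _ hm) t)
  exact_mod_cast (ZMod.intCast_zmod_eq_zero_iff_dvd _ _).mpr hdvd'

end Constraints

/-! ### Subrings with given invariants through a generic point -/

section Generic

variable {n p s : ℕ} {a : Fin n → ℕ} {d : Fin n → Fin n → ℕ} {x : Fin n → ℤ}

/-- `x` is generic up to `s`: the valuation of each `x_i - x_j` exceeds the contact order `d i j`
by at most `s`. -/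
def Generic (p s : ℕ) (d : Fin n → Fin n → ℕ) (x : Fin n → ℤ) : Prop :=
  ∀ ⦃i j⦄, i < j → emultiplicity (p : ℤ) (x i - x j) ≤ (d i j + s : ℕ)

/-- The `p`-adic length of the freedom left for the image of the `i`-th pivot in the coordinate
`j > i` of a subring through a point that is generic up to `s`. -/
def freedom (s : ℕ) (a : Fin n → ℕ) (d : Fin n → Fin n → ℕ) (i j : Fin n) : ℕ :=
  min (∑ l ∈ Iio i, (d l i + s) - a i) (min (d i j + s) (a j - d i j))

lemma freedom_castSucc (s : ℕ) (a : Fin (n + 1) → ℕ) (d : Fin (n + 1) → Fin (n + 1) → ℕ)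
    (i j : Fin n) : freedom s (fun j => a j.castSucc) (fun i j => d i.castSucc j.castSucc) i j =
      freedom s a d i.castSucc j.castSucc := by
  simp only [freedom, Fin.sum_Iio_castSucc]

lemma emultiplicity_le_of_prod_eq (hp : p.Prime) (hx : Generic p s d x) {i : Fin n} {b : ℕ} {u : ℤ}
    (hprod : ∏ l ∈ Iio i, (x l - x i) = (p : ℤ) ^ b * u) :
    emultiplicity (p : ℤ) u ≤ (∑ l ∈ Iio i, (d l i + s) - b : ℕ) := by
  have hpi := Nat.prime_iff_prime_int.mp hp
  have hsum : (b : ℕ∞) + emultiplicity (p : ℤ) u ≤ (∑ l ∈ Iio i, (d l i + s) : ℕ) := by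
    rw [← emultiplicity_pow_self hpi.ne_zero hpi.not_isUnit b, ← emultiplicity_mul hpi, ← hprod,
      Finset.emultiplicity_prod hpi, Nat.cast_sum]
    exact sum_le_sum fun l hl => hx (mem_Iio.mp hl)
  rw [ENat.natCast_sub]
  exact ENat.le_sub_of_add_le_left (ENat.natCast_ne_top b) hsum

lemma Generic.castSucc {d : Fin (n + 1) → Fin (n + 1) → ℕ} {x : Fin (n + 1) → ℤ}
    (hx : Generic p s d x) :
    Generic p s (fun i j => d i.castSucc j.castSucc) (initHom n x) :=
  fun _ _ hij => hx (Fin.castSucc_lt_castSucc_iff.mpr hij)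

lemma pow_freedom_mul_eq_zero (hp : p.Prime) {a : Fin (n + 1) → ℕ}
    {d : Fin (n + 1) → Fin (n + 1) → ℕ} {x : Fin (n + 1) → ℤ} (hx : Generic p s d x)
    {S : Subring (Fin n → ℤ)} {φ ψ : S →+* ZMod (p ^ a (Fin.last n))}
    (hS : HasInvariants p (fun j => a j.castSucc) (fun i j => d i.castSucc j.castSucc) S)
    (hφ : HasInvariants p a d (graphSubring φ)) (hψ : HasInvariants p a d (graphSubring ψ))
    (hxφ : x ∈ graphSubring φ) (hxψ : x ∈ graphSubring ψ) {i : Fin n}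
    (hagree : ∀ r : S, (∀ l ≤ i, r.1 l = 0) → φ r = ψ r) (r : S) (hr : ∀ l < i, r.1 l = 0) :
    (p : ZMod (p ^ a (Fin.last n))) ^ freedom s a d i.castSucc (Fin.last n) * (φ r - ψ r) = 0 := by
  obtain ⟨hξ, hφξ⟩ := mem_graphSubring.mp hxφ
  obtain ⟨_, hψξ⟩ := mem_graphSubring.mp hxψ
  have hilast := Fin.castSucc_lt_last i
  obtain ⟨u, hu⟩ := hS.pow_pivot_dvd_prod_sub ⟨_, hξ⟩ i
  rw [freedom]
  rcases min_choice (∑ l ∈ Iio i.castSucc, (d l i.castSucc + s) - a i.castSucc)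
    (min (d i.castSucc (Fin.last n) + s) (a (Fin.last n) - d i.castSucc (Fin.last n)))
    with h | h <;> rw [h]
  · refine pow_mul_eq_zero_of_emultiplicity_le hp ?_
      (mul_eq_zero_of_agree_of_prod_eq hagree hr hφξ hψξ (hS.pow_pivot_dvd r.2 hr) hu)
    rw [Fin.sum_Iio_castSucc]
    exact emultiplicity_le_of_prod_eq hp hx.castSucc hu
  rcases min_choice (d i.castSucc (Fin.last n) + s)
    (a (Fin.last n) - d i.castSucc (Fin.last n)) with h | h <;> rw [h]
  · exact pow_mul_eq_zero_of_emultiplicity_le hp (hx hilast)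
      (sub_mul_eq_zero_of_agree hagree hr hφξ hψξ)
  · exact pow_sub_mul_eq_zero_of_contact hφ hψ ((hφ.admissible hp).contact_le_pivot hilast) r

lemma card_fiber_le_of_forall_agree (hp : p.Prime) {a : Fin (n + 1) → ℕ}
    {d : Fin (n + 1) → Fin (n + 1) → ℕ} {S : Subring (Fin n → ℤ)}
    {A : Finset (Subring (Fin (n + 1) → ℤ))} (hA : ∀ R ∈ A, HasInvariants p a d R)
    (hAS : ∀ R ∈ A, R.map (initHom n) = S) (m : Fin n → ℕ)
    (hm : ∀ i (φ ψ : S →+* ZMod (p ^ a (Fin.last n))),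
      HasInvariants p (fun j => a j.castSucc) (fun i j => d i.castSucc j.castSucc) S →
      graphSubring φ ∈ A → graphSubring ψ ∈ A → (∀ r : S, (∀ l ≤ i, r.1 l = 0) → φ r = ψ r) →
      ∀ r : S, (∀ l < i, r.1 l = 0) →
        (p : ZMod (p ^ a (Fin.last n))) ^ m i * (φ r - ψ r) = 0) :
    #A ≤ p ^ ∑ i, m i := by
  classical
  rcases A.eq_empty_or_nonempty with rfl | ⟨R, hR⟩
  · simp
  have hS := hAS R hR ▸ (hA R hR).map_initHom
  obtain ⟨Φ, rfl⟩ := exists_finset_image_graphSubring (q := p ^ a (Fin.last n)) hAS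
    fun R hR => by rw [(hA R hR).pivot, Nat.cast_pow]
  exact card_image_le.trans <| card_ringHom_le hp hS Φ _ fun i φ hφ ψ hψ =>
    hm i φ ψ hS (mem_image_of_mem _ hφ) (mem_image_of_mem _ hψ)

lemma card_fiber_le (hp : p.Prime) {a : Fin (n + 1) → ℕ}
    {d : Fin (n + 1) → Fin (n + 1) → ℕ} {x : Fin (n + 1) → ℤ} (hx : Generic p s d x)
    {S : Subring (Fin n → ℤ)} {A : Finset (Subring (Fin (n + 1) → ℤ))}
    (hA : ∀ R ∈ A, HasInvariants p a d R) (hxA : ∀ R ∈ A, x ∈ R)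
    (hAS : ∀ R ∈ A, R.map (initHom n) = S) :
    #A ≤ p ^ ∑ i : Fin n, freedom s a d i.castSucc (Fin.last n) :=
  card_fiber_le_of_forall_agree hp hA hAS _ fun _ _ _ hS hφ hψ hagree =>
    pow_freedom_mul_eq_zero hp hx hS (hA _ hφ) (hA _ hψ) (hxA _ hφ) (hxA _ hψ) hagree

theorem card_le_of_generic_mem (hp : p.Prime) (hx : Generic p s d x)
    {A : Finset (Subring (Fin n → ℤ))} (hA : ∀ R ∈ A, HasInvariants p a d R)
    (hxA : ∀ R ∈ A, x ∈ R) : #A ≤ p ^ ∑ j, ∑ i ∈ Iio j, freedom s a d i j := by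
  classical
  induction n with
  | zero => simpa using card_le_one.mpr fun R _ R' _ =>
      SetLike.coe_injective (Set.Nonempty.eq_univ ⟨0, R.zero_mem⟩ |>.trans
        (Set.Nonempty.eq_univ ⟨0, R'.zero_mem⟩).symm)
  | succ n ih =>
    have hfiber : #A ≤ p ^ (∑ i : Fin n, freedom s a d i.castSucc (Fin.last n)) *
        #(A.image (Subring.map (initHom n))) := by
      refine card_le_mul_card_image A _ fun S _ => card_fiber_le (S := S) hp hx
        (fun R hR => hA R (mem_filter.mp hR).1) (fun R hR => hxA R (mem_filter.mp hR).1)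
        fun R hR => (mem_filter.mp hR).2
    have hbase := ih (A := A.image (Subring.map (initHom n))) hx.castSucc
      (forall_mem_image.mpr fun R hR => (hA R hR).map_initHom)
      (forall_mem_image.mpr fun R hR => ⟨x, hxA R hR, rfl⟩)
    refine hfiber.trans ((Nat.mul_le_mul_left _ hbase).trans_eq ?_)
    rw [← pow_add, Fin.sum_univ_castSucc, add_comm, Fin.Iio_last_eq_map, sum_map]
    simp only [freedom_castSucc, Fin.sum_Iio_castSucc, Fin.coe_castSuccEmb]

end Generic

/-! ### Averaging over generic points -/

section Averaging

variable {n p s : ℕ} {a : Fin n → ℕ} {d : Fin n → Fin n → ℕ} {R : Subring (Fin n → ℤ)}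

/-- The representative of a vector mod `q` with entries in `[0, q)`. -/
def lift {q : ℕ} (x : Fin n → ZMod q) : Fin n → ℤ := fun i => (x i).val

lemma reduction_lift {q : ℕ} [NeZero q] (x : Fin n → ZMod q) : reduction n q (lift x) = x :=
  funext fun i => by simp [lift]

open scoped Classical in
lemma card_filter_lift_mem_mul_index {q : ℕ} [NeZero q] {H : AddSubgroup (Fin n → ℤ)}
    (hH : ∀ v, q • v ∈ H) : #{x : Fin n → ZMod q | lift x ∈ H} * H.index = q ^ n := by
  set red := (reduction n q).toAddMonoidHom
  have hmem (x : Fin n → ZMod q) : lift x ∈ H ↔ x ∈ H.map red := by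
    refine ⟨fun hx => ⟨_, hx, reduction_lift x⟩, ?_⟩
    rintro ⟨h, hh, rfl⟩
    rw [← add_sub_cancel h (lift _)]
    refine H.add_mem hh (mem_of_reduction_eq_zero hH ?_)
    rw [map_sub, reduction_lift, sub_eq_zero]
    rfl
  have hker : red.ker ≤ H := fun x hx => mem_of_reduction_eq_zero hH hx
  have hcard : #{x : Fin n → ZMod q | lift x ∈ H} = Nat.card (H.map red) := by
    rw [← Fintype.card_subtype, ← Nat.card_eq_fintype_card]
    exact Nat.card_congr (Equiv.subtypeEquivRight hmem)
  have hindex : (H.map red).index = H.index :=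
    AddSubgroup.index_map_eq H (reduction_surjective n q) hker
  rw [hcard, ← hindex, AddSubgroup.card_mul_index, Nat.card_fun, Nat.card_zmod, Nat.card_fin]

/-- The elements of `R` on which the coordinates `i` and `j` are congruent modulo `p ^ m`. -/
def closeSubgroup (p m : ℕ) (R : Subring (Fin n → ℤ)) (i j : Fin n) : AddSubgroup (Fin n → ℤ) :=
  (AddSubgroup.zmultiples ((p : ℤ) ^ m)).comap (coordSub i j) ⊓ R.toAddSubgroup

lemma mem_closeSubgroup {m : ℕ} {i j : Fin n} {x : Fin n → ℤ} :
    x ∈ closeSubgroup p m R i j ↔ (p : ℤ) ^ m ∣ x i - x j ∧ x ∈ R := by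
  rw [closeSubgroup, AddSubgroup.mem_inf, AddSubgroup.mem_comap, Int.mem_zmultiples_iff]
  rfl

lemma index_closeSubgroup (hp : p.Prime) (hR : HasInvariants p a d R) {i j : Fin n} (hij : i ≠ j)
    (m : ℕ) : (closeSubgroup p (d i j + m) R i j).index = p ^ m * R.toAddSubgroup.index := by
  have hle : AddSubgroup.zmultiples ((p : ℤ) ^ (d i j + m)) ≤ .zmultiples ((p : ℤ) ^ d i j) :=
    AddSubgroup.zmultiples_le_of_mem (Int.mem_zmultiples_iff.mpr (pow_dvd_pow _ (by omega)))
  have hrel : (AddSubgroup.zmultiples ((p : ℤ) ^ (d i j + m))).relIndex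
      (.zmultiples ((p : ℤ) ^ d i j)) = p ^ m := by
    have h := AddSubgroup.relIndex_mul_index hle
    simp only [Int.index_zmultiples, Int.natAbs_pow, Int.natAbs_natCast] at h
    exact Nat.eq_of_mul_eq_mul_right (pow_pos hp.pos _) (h.trans (by rw [pow_add, mul_comm]))
  rw [closeSubgroup, ← AddSubgroup.relIndex_mul_index inf_le_right, AddSubgroup.inf_relIndex_right,
    AddSubgroup.relIndex_comap, hR.contact hij, hrel]

lemma exists_mem_closeSubgroup_of_not_generic {x : Fin n → ℤ} (hxR : x ∈ R)
    (hx : ¬ Generic p s d x) :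
    ∃ t ∈ coordPairs n, x ∈ closeSubgroup p (d t.2 t.1 + (s + 1)) R t.2 t.1 := by
  simp only [Generic, not_forall, not_le] at hx
  obtain ⟨i, j, hij, hlt⟩ := hx
  refine ⟨⟨j, i⟩, mem_coordPairs.mpr hij, mem_closeSubgroup.mpr ⟨?_, hxR⟩⟩
  rw [pow_dvd_iff_le_emultiplicity, ← add_assoc, Nat.cast_add_one]
  exact Order.add_one_le_of_lt hlt

open scoped Classical in
lemma pow_mul_card_filter_lift_mem_closeSubgroup (hp : p.Prime) (hR : HasInvariants p a d R)
    {q : ℕ} [NeZero q] (hqR : ∀ v, q • v ∈ R) {i j : Fin n} (hij : i ≠ j) {m : ℕ}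
    (hqd : p ^ (d i j + m) ∣ q) :
    p ^ m * #{x : Fin n → ZMod q | lift x ∈ closeSubgroup p (d i j + m) R i j} =
      #{x : Fin n → ZMod q | lift x ∈ R} := by
  have hindex : 0 < R.toAddSubgroup.index := hR.index_eq ▸ pow_pos hp.pos _
  have hclose := card_filter_lift_mem_mul_index (q := q) (H := closeSubgroup p (d i j + m) R i j)
    fun v => mem_closeSubgroup.mpr ⟨by
      have : (p : ℤ) ^ (d i j + m) ∣ q := by exact_mod_cast hqd
      simpa [mul_sub] using this.mul_right (v i - v j), hqR v⟩
  have hR_card := card_filter_lift_mem_mul_index (H := R.toAddSubgroup) hqR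
  rw [index_closeSubgroup hp hR hij, ← hR_card, ← mul_assoc, mul_comm _ (p ^ m)] at hclose
  exact Nat.eq_of_mul_eq_mul_right hindex hclose

open scoped Classical in
/-- Each of the pairs `i < j` spoils a proportion `p ^ -(s + 1)` of the points of `R`. -/
lemma card_filter_lift_mem_le (hp : p.Prime) (hR : HasInvariants p a d R)
    (hs : #(coordPairs n) < p ^ (s + 1)) {q : ℕ} [NeZero q] (hqR : ∀ v, q • v ∈ R)
    (hqd : ∀ i j : Fin n, i < j → p ^ (d i j + (s + 1)) ∣ q) :
    #{x : Fin n → ZMod q | lift x ∈ R} ≤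
      (#(coordPairs n) + 1) * #{x : Fin n → ZMod q | Generic p s d (lift x) ∧ lift x ∈ R} := by
  set T := #{x : Fin n → ZMod q | lift x ∈ R}
  have hclose : ∀ t ∈ coordPairs n, (#(coordPairs n) + 1) * #{x : Fin n → ZMod q |
      lift x ∈ closeSubgroup p (d t.2 t.1 + (s + 1)) R t.2 t.1} ≤ T := by
    intro t ht
    have ht := mem_coordPairs.mp ht
    exact (Nat.mul_le_mul_right _ hs).trans_eq
      (pow_mul_card_filter_lift_mem_closeSubgroup hp hR hqR ht.ne (hqd _ _ ht))
  have hcover : T ≤ #{x : Fin n → ZMod q | Generic p s d (lift x) ∧ lift x ∈ R} +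
      ∑ t ∈ coordPairs n, #{x : Fin n → ZMod q |
        lift x ∈ closeSubgroup p (d t.2 t.1 + (s + 1)) R t.2 t.1} := by
    refine (card_le_card fun x hx => ?_).trans
      ((card_union_le _ _).trans (Nat.add_le_add_left card_biUnion_le _))
    have hxR := (mem_filter.mp hx).2
    by_cases hgen : Generic p s d (lift x)
    · exact mem_union_left _ (by simp [hgen, hxR])
    · obtain ⟨t, ht, hxt⟩ := exists_mem_closeSubgroup_of_not_generic hxR hgen
      exact mem_union_right _ (mem_biUnion.mpr ⟨t, ht, by simpa using hxt⟩)
  have hsum := sum_le_card_nsmul _ _ _ hclose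
  rw [← mul_sum, smul_eq_mul] at hsum
  nlinarith [Nat.mul_le_mul_left (#(coordPairs n) + 1) hcover]

/-- The exponent of the index of the lattice of all `x` with `p ^ d i j ∣ x_i - x_j` when `d` is
an ultrametric. -/
def weight (d : Fin n → Fin n → ℕ) : ℕ := ∑ j, (Iio j).sup fun i => d i j

/-- The lattice of all `x` with `p ^ d i j ∣ x_i - x_j` for `i < j`. -/
def contactLattice (p : ℕ) (d : Fin n → Fin n → ℕ) : AddSubgroup (Fin n → ℤ) :=
  ⨅ (i) (j) (_ : i < j), (AddSubgroup.zmultiples ((p : ℤ) ^ d i j)).comap (coordSub i j)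

lemma mem_contactLattice {x : Fin n → ℤ} :
    x ∈ contactLattice p d ↔ ∀ i j, i < j → (p : ℤ) ^ d i j ∣ x i - x j := by
  simp only [contactLattice, AddSubgroup.mem_iInf, AddSubgroup.mem_comap, Int.mem_zmultiples_iff,
    coordSub_apply]

lemma HasInvariants.mem_contactLattice (hR : HasInvariants p a d R) {x : Fin n → ℤ} (hx : x ∈ R) :
    x ∈ contactLattice p d :=
  SubringAsymptotics.mem_contactLattice.mpr fun _ _ hij => hR.pow_contact_dvd hij.ne hx

lemma pow_weight_dvd_index_contactLattice (p : ℕ) (d : Fin n → Fin n → ℕ) :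
    p ^ weight d ∣ (contactLattice p d).index := by
  rw [index_eq_prod_index_pivotSubgroup, weight, ← prod_pow_eq_pow_sum]
  refine prod_dvd_prod_of_dvd _ _ fun j _ => ?_
  have hle : pivotSubgroup (contactLattice p d) j ≤
      .zmultiples ((p : ℤ) ^ (Iio j).sup fun i => d i j) := by
    intro c hc
    obtain ⟨h, hh, hlt, rfl⟩ := mem_pivotSubgroup.mp hc
    rw [Int.mem_zmultiples_iff]
    refine sup_induction (p := fun e => (p : ℤ) ^ e ∣ h j) (by simp) (fun e he f hf => ?_)
      fun i hi => ?_
    · rcases le_total e f with hef | hef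
      · rwa [sup_of_le_right hef]
      · rwa [sup_of_le_left hef]
    · have hi := mem_Iio.mp hi
      simpa [hlt i hi] using SubringAsymptotics.mem_contactLattice.mp hh i j hi
  simpa [Int.index_zmultiples, Int.natAbs_pow] using AddSubgroup.index_dvd_of_le hle

open scoped Classical in
lemma sum_card_filter_generic_mul_le {A : Finset (Subring (Fin n → ℤ))}
    (hA : ∀ R ∈ A, HasInvariants p a d R) {q g c : ℕ} [NeZero q]
    (hqd : ∀ i j : Fin n, i < j → p ^ d i j ∣ q)
    (h : ∀ (x : Fin n → ℤ) (A' : Finset (Subring (Fin n → ℤ))), Generic p s d x →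
      (∀ R ∈ A', HasInvariants p a d R) → (∀ R ∈ A', x ∈ R) → #A' * p ^ g ≤ c * p ^ weight d) :
    (∑ R ∈ A, #{x : Fin n → ZMod q | Generic p s d (lift x) ∧ lift x ∈ R}) * p ^ g ≤
      c * q ^ n := by
  set L : Finset (Fin n → ZMod q) := {x | lift x ∈ contactLattice p d}
  have hL : #L * (contactLattice p d).index = q ^ n :=
    card_filter_lift_mem_mul_index fun v => mem_contactLattice.mpr fun i j hij => by
      have : (p : ℤ) ^ d i j ∣ q := by exact_mod_cast hqd i j hij
      simpa [mul_sub] using this.mul_right (v i - v j)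
  have hL_weight : #L * p ^ weight d ≤ q ^ n := by
    refine hL ▸ Nat.mul_le_mul_left _ (Nat.le_of_dvd ?_ (pow_weight_dvd_index_contactLattice p d))
    exact Nat.pos_of_mul_pos_left (hL ▸ pow_pos (NeZero.pos q) n)
  have hswap : ∑ R ∈ A, #{x : Fin n → ZMod q | Generic p s d (lift x) ∧ lift x ∈ R} ≤
      ∑ x ∈ L with Generic p s d (lift x), #{R ∈ A | lift x ∈ R} := by
    refine (sum_le_sum fun R hR => card_le_card fun x hx => ?_).trans_eq
      (sum_card_bipartiteAbove_eq_sum_card_bipartiteBelow fun R x => lift x ∈ R)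
    obtain ⟨hgen, hxR⟩ := (mem_filter.mp hx).2
    simp [bipartiteAbove, L, hgen, hxR, (hA R hR).mem_contactLattice hxR]
  calc _ ≤ ∑ x ∈ L with Generic p s d (lift x), #{R ∈ A | lift x ∈ R} * p ^ g := by
        rw [← sum_mul]
        exact Nat.mul_le_mul_right _ hswap
    _ ≤ ∑ x ∈ L with Generic p s d (lift x), c * p ^ weight d :=
        sum_le_sum fun x hx => h (lift x) _ (mem_filter.mp hx).2
          (fun R hR => hA R (mem_filter.mp hR).1) fun R hR => (mem_filter.mp hR).2
    _ ≤ #L * (c * p ^ weight d) := by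
        rw [sum_const, smul_eq_mul]
        exact Nat.mul_le_mul_right _ (card_filter_le _ _)
    _ = c * (#L * p ^ weight d) := by ring
    _ ≤ c * q ^ n := Nat.mul_le_mul_left c hL_weight

/-- Double counting of the pairs consisting of a member of `A` and a generic point on it, modulo a
large power of `p`. -/
theorem card_mul_pow_le_of_forall_generic (hp : p.Prime) {A : Finset (Subring (Fin n → ℤ))}
    (hA : ∀ R ∈ A, HasInvariants p a d R) (hs : #(coordPairs n) < p ^ (s + 1)) {g c : ℕ}
    (h : ∀ (x : Fin n → ℤ) (A' : Finset (Subring (Fin n → ℤ))), Generic p s d x →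
      (∀ R ∈ A', HasInvariants p a d R) → (∀ R ∈ A', x ∈ R) → #A' * p ^ g ≤ c * p ^ weight d) :
    #A * p ^ g ≤ (#(coordPairs n) + 1) * c * p ^ ∑ j, a j := by
  classical
  set q := p ^ (∑ j, a j + (∑ i, ∑ j, d i j + (s + 1))) with hq
  have hq0 : 0 < q := pow_pos hp.pos _
  have : NeZero q := ⟨hq0.ne'⟩
  have hqR : ∀ R ∈ A, ∀ v, q • v ∈ R := fun R hR v => by
    rw [hq, pow_add, mul_comm, mul_smul]
    exact R.nsmul_mem (nsmul_mem_of_index_eq (hA R hR).index_eq v) _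
  have hqd (i j : Fin n) : p ^ (d i j + (s + 1)) ∣ q := by
    have hi := single_le_sum (f := fun i => ∑ j, d i j) (fun _ _ => Nat.zero_le _) (mem_univ i)
    have hj := single_le_sum (f := d i) (fun _ _ => Nat.zero_le _) (mem_univ j)
    exact pow_dvd_pow p (by omega)
  have hgeneric (R) (hR : R ∈ A) : q ^ n ≤ (#(coordPairs n) + 1) *
      #{x : Fin n → ZMod q | Generic p s d (lift x) ∧ lift x ∈ R} * p ^ ∑ j, a j := by
    rw [← card_filter_lift_mem_mul_index (H := R.toAddSubgroup) (hqR R hR), (hA R hR).index_eq]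
    exact Nat.mul_le_mul_right _
      (card_filter_lift_mem_le hp (hA R hR) hs (hqR R hR) fun i j _ => hqd i j)
  have hsum := card_nsmul_le_sum A _ _ hgeneric
  have hdouble := sum_card_filter_generic_mul_le (s := s) hA
    (fun i j _ => (pow_dvd_pow p (Nat.le_add_right _ _)).trans (hqd i j)) h
  refine Nat.le_of_mul_le_mul_left ?_ (pow_pos hq0 n)
  rw [← sum_mul, ← mul_sum, smul_eq_mul] at hsum
  calc q ^ n * (#A * p ^ g) = #A * q ^ n * p ^ g := by ring
    _ ≤ _ := Nat.mul_le_mul_right _ hsum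
    _ = (#(coordPairs n) + 1) * p ^ (∑ j, a j) * ((∑ R ∈ A,
          #{x : Fin n → ZMod q | Generic p s d (lift x) ∧ lift x ∈ R}) * p ^ g) := by ring
    _ ≤ _ := Nat.mul_le_mul_left _ hdouble
    _ = _ := by ring

end Averaging

/-! ### Numerical estimates for five coordinates -/

section SmallFreedom

variable {n s : ℕ}

lemma freedom_le_contact_add (s : ℕ) (a : Fin n → ℕ) (d : Fin n → Fin n → ℕ) (i j : Fin n) :
    freedom s a d i j ≤ d i j + s :=
  (min_le_right _ _).trans (min_le_left _ _)

@[simp] lemma freedom_zero (a : Fin (n + 1) → ℕ) (d : Fin (n + 1) → Fin (n + 1) → ℕ)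
    (j : Fin (n + 1)) : freedom s a d 0 j = 0 := by
  have hempty : Iio (0 : Fin (n + 1)) = ∅ := Iio_bot
  simp [freedom, hempty]

lemma freedom_one_le {a : Fin (n + 2) → ℕ} {d : Fin (n + 2) → Fin (n + 2) → ℕ}
    (h : Admissible a d) (j : Fin (n + 2)) : freedom s a d 1 j ≤ s := by
  have h01 : d 0 1 ≤ a 1 := h.contact_le_pivot Fin.zero_lt_one
  have hzero : Iio (1 : Fin (n + 2)) = {0} := by
    ext l
    simp [Fin.lt_one_iff]
  refine (min_le_left _ _).trans ?_
  rw [hzero, sum_singleton]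
  omega

end SmallFreedom

section FiveNumerics

variable {s : ℕ} {a : Fin 5 → ℕ} {d : Fin 5 → Fin 5 → ℕ}

lemma sum_sum_Iio_fin_five (f : Fin 5 → Fin 5 → ℕ) :
    ∑ j, ∑ i ∈ Iio j, f i j = f 0 1 + (f 0 2 + f 1 2) + (f 0 3 + f 1 3 + f 2 3) +
      (f 0 4 + f 1 4 + f 2 4 + f 3 4) := by
  simp only [Fin.sum_univ_five, show Iio (0 : Fin 5) = ∅ by decide,
    show Iio (1 : Fin 5) = {0} by decide, show Iio (2 : Fin 5) = {0, 1} by decide,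
    show Iio (3 : Fin 5) = {0, 1, 2} by decide, show Iio (4 : Fin 5) = {0, 1, 2, 3} by decide]
  simp [add_assoc]

lemma weight_fin_five (d : Fin 5 → Fin 5 → ℕ) :
    weight d = d 0 1 + max (d 0 2) (d 1 2) + max (d 0 3) (max (d 1 3) (d 2 3)) +
      max (d 0 4) (max (d 1 4) (max (d 2 4) (d 3 4))) := by
  simp only [weight, Fin.sum_univ_five, show Iio (0 : Fin 5) = ∅ by decide,
    show Iio (1 : Fin 5) = {0} by decide, show Iio (2 : Fin 5) = {0, 1} by decide,
    show Iio (3 : Fin 5) = {0, 1, 2} by decide, show Iio (4 : Fin 5) = {0, 1, 2, 3} by decide]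
  simp [add_assoc]

lemma freedom_two (s : ℕ) (a : Fin 5 → ℕ) (d : Fin 5 → Fin 5 → ℕ) (j : Fin 5) :
    freedom s a d 2 j =
      min (d 0 2 + s + (d 1 2 + s) - a 2) (min (d 2 j + s) (a j - d 2 j)) := by
  simp [freedom, show Iio (2 : Fin 5) = {0, 1} by decide]

lemma freedom_three (s : ℕ) (a : Fin 5 → ℕ) (d : Fin 5 → Fin 5 → ℕ) (j : Fin 5) :
    freedom s a d 3 j = min (d 0 3 + s + (d 1 3 + s + (d 2 3 + s)) - a 3)
      (min (d 3 j + s) (a j - d 3 j)) := by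
  simp [freedom, show Iio (3 : Fin 5) = {0, 1, 2} by decide]

lemma freedom_two_le (h : Admissible a d) (j : Fin 5) :
    freedom s a d 2 j ≤ min (d 0 2) (d 1 2) + 2 * s := by
  have h02 : d 0 2 ≤ a 2 := h.contact_le_pivot (by decide)
  have h12 : d 1 2 ≤ a 2 := h.contact_le_pivot (by decide)
  refine (freedom_two s a d j).trans_le ((min_le_left _ _).trans ?_)
  omega

lemma sum_freedom_add_le (h : Admissible a d) :
    ∑ j, ∑ i ∈ Iio j, freedom s a d i j + d 0 3 ≤ weight d + 8 * s := by
  have hone := freedom_one_le (s := s) h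
  have htwo := freedom_two_le (s := s) h
  have hthree := freedom_le_contact_add s a d 3 4
  have hultra : min (d 0 2) (d 1 2) ≤ d 0 1 :=
    h.symm (show (1 : Fin 5) ≠ 2 by decide) ▸ h.ultrametric (by decide) (by decide) (by decide)
  have hmin : min (d 0 2) (d 1 2) ≤ max (d 0 2) (d 1 2) := min_le_max
  have hweight : d 0 1 + max (d 0 2) (d 1 2) + d 0 3 + d 3 4 ≤ weight d := by
    rw [weight_fin_five]
    gcongr <;> simp
  rw [sum_sum_Iio_fin_five]
  simp only [freedom_zero]
  linarith [hone 2, hone 3, hone 4, htwo 3, htwo 4]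

lemma sum_freedom_add_two_le_of_contact_eq_one (h : Admissible a d)
    (hd : ∀ i j, i < j → d i j = 1) (ha : a 3 ≠ 2) :
    ∑ j, ∑ i ∈ Iio j, freedom 0 a d i j + 2 ≤ weight d := by
  have h12 : d 1 2 ≤ a 2 := h.contact_le_pivot (by decide)
  have h23 : d 2 3 ≤ a 3 := h.contact_le_pivot (by decide)
  have hone := freedom_one_le (s := 0) h
  rw [sum_sum_Iio_fin_five, weight_fin_five]
  simp only [freedom_zero, Nat.le_zero.mp (hone _), freedom_two, freedom_three, hd 0 1 (by decide),
    hd 0 2 (by decide), hd 1 2 (by decide), hd 0 3 (by decide), hd 1 3 (by decide),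
    hd 2 3 (by decide), hd 0 4 (by decide), hd 1 4 (by decide), hd 2 4 (by decide),
    hd 3 4 (by decide)] at *
  omega

lemma contact_zero_or_contact_zero_or_one_le (h : Admissible a d) (i j l : Fin 5)
    (hijl : i ≠ j ∧ j ≠ l ∧ i ≠ l) : d i j = 0 ∨ d j l = 0 ∨ 1 ≤ d i l := by
  have := h.ultrametric hijl.1 hijl.2.1 hijl.2.2
  omega

lemma contact_eq_of_contact_eq_one (h : Admissible a d) (hd : ∀ i j, i < j → d i j ≤ 1)
    (h03 : d 0 3 = 1) {l : Fin 5} (hl : l ≠ 0 ∧ l ≠ 3) : d 3 l = d 0 l := by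
  have hd' (i : Fin 5) (hil : i ≠ l) : d i l ≤ 1 :=
    hil.lt_or_gt.elim (hd i l) fun hlt => h.symm hil ▸ hd l i hlt
  have h0 := hd' 0 hl.1.symm
  have h3 := hd' 3 hl.2.symm
  have h30 : d 3 0 = d 0 3 := h.symm (by decide)
  have := contact_zero_or_contact_zero_or_one_le h 0 3 l ⟨by decide, hl.2.symm, hl.1.symm⟩
  have := contact_zero_or_contact_zero_or_one_le h 3 0 l ⟨by decide, hl.1.symm, hl.2.symm⟩
  omega

lemma contact_eq_one_of_contact_zero_eq_one (h : Admissible a d) (hd : ∀ i j, i < j → d i j ≤ 1)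
    (h0 : ∀ l, l ≠ 0 → d 0 l = 1) (i j : Fin 5) (hij : i < j) : d i j = 1 := by
  have hj0 : j ≠ 0 := (Fin.zero_le i |>.trans_lt hij).ne'
  rcases eq_or_ne i 0 with rfl | hi0
  · exact h0 j hj0
  have := contact_zero_or_contact_zero_or_one_le h i 0 j ⟨hi0, hj0.symm, hij.ne⟩
  have := h.symm hi0
  have := h0 i hi0
  have := h0 j hj0
  have := hd i j hij
  omega

/-- Since `0` and `3` are in contact of the maximal order `1`, only the four points other than `3`
matter. -/
lemma sum_freedom_add_two_le_of_contact_le_one (h : Admissible a d) (hd : ∀ i j, i < j → d i j ≤ 1)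
    (h03 : d 0 3 = 1) (hne : ¬ ∀ i j, i < j → d i j = 1) (hk : 2 ≤ ∑ j, a j) :
    ∑ j, ∑ i ∈ Iio j, freedom 0 a d i j + 2 ≤ weight d := by
  have hsymm (i j : Fin 5) (hij : i ≠ j := by decide) : d i j = d j i := h.symm hij
  have htri (i j l : Fin 5) (hijl : i ≠ j ∧ j ≠ l ∧ i ≠ l := by decide) :=
    contact_zero_or_contact_zero_or_one_le h i j l hijl
  have h13 : d 1 3 = d 0 1 := (hsymm 1 3).trans (contact_eq_of_contact_eq_one h hd h03 (by decide))
  have h23 : d 2 3 = d 0 2 := (hsymm 2 3).trans (contact_eq_of_contact_eq_one h hd h03 (by decide))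
  have h34 : d 3 4 = d 0 4 := contact_eq_of_contact_eq_one h hd h03 (by decide)
  have hone := fun j => Nat.le_zero.mp (freedom_one_le (s := 0) h j)
  have htwo := freedom_two_le (s := 0) h
  have h24f := freedom_le_contact_add 0 a d 2 4
  have h34f := freedom_le_contact_add 0 a d 3 4
  have h34f' : freedom 0 a d 3 4 ≤ d 1 3 + d 2 3 := by
    have h03a : d 0 3 ≤ a 3 := h.contact_le_pivot (by decide)
    exact (freedom_three 0 a d 4).trans_le ((min_le_left _ _).trans (by omega))
  have hsum := hk.trans (sum_le_sum fun j _ => h.pivot_le j)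
  rw [sum_sum_Iio_fin_five] at hsum ⊢
  simp only [h03, h13, h23, h34] at hsum h34f h34f'
  simp only [weight_fin_five, freedom_zero, hone, h03, h13, h23, h34]
  have := htwo 3
  have := htwo 4
  by_cases h012 : d 0 2 = 1 ∧ d 1 2 = 1
  · have h01 : d 0 1 = 1 := by
      have := hd 0 1 (by decide); have := htri 0 2 1; have := hsymm 1 2
      omega
    have h04 : d 0 4 = 0 := by
      by_contra h04
      have h04' : d 0 4 = 1 := le_antisymm (hd 0 4 (by decide)) (Nat.pos_of_ne_zero h04)
      refine hne (contact_eq_one_of_contact_zero_eq_one h hd fun l hl => ?_)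
      fin_cases l
      exacts [absurd rfl hl, h01, h012.1, h03, h04']
    have h24 : d 2 4 = 0 := by
      have := htri 0 2 4
      omega
    omega
  · have := hd 0 2 (by decide); have := hd 1 2 (by decide); have := hd 0 4 (by decide)
    have hmin : min (d 0 2) (d 1 2) = 0 := by omega
    omega

lemma sum_freedom_add_two_le_or (h : Admissible a d) (hmax : ∀ i j, i < j → d i j ≤ d 0 3)
    (hk : 2 ≤ ∑ j, a j) :
    ∑ j, ∑ i ∈ Iio j, freedom 0 a d i j + 2 ≤ weight d ∨
      (∀ i j, i < j → d i j = 1) ∧ a 3 = 2 := by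
  by_cases hbig : 2 ≤ d 0 3
  · have := sum_freedom_add_le (s := 0) h
    omega
  by_cases hd : ∀ i j, i < j → d i j = 1
  · by_cases ha : a 3 = 2
    · exact .inr ⟨hd, ha⟩
    · exact .inl (sum_freedom_add_two_le_of_contact_eq_one h hd ha)
  have h03 : d 0 3 ≠ 0 := fun h0 => by
    have hsum : ∑ j, a j ≤ 0 := (sum_le_sum fun j _ => h.pivot_le j).trans_eq <|
      sum_eq_zero fun j _ => sum_eq_zero fun i hi =>
        Nat.le_zero.mp (h0 ▸ hmax i j (mem_Iio.mp hi))
    omega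
  exact .inl (sum_freedom_add_two_le_of_contact_le_one h
    (fun i j hij => (hmax i j hij).trans (by omega)) (by omega) hd hk)

end FiveNumerics

/-! ### The exceptional stratum with all contact orders equal to one -/

section ContactOne

variable {p : ℕ} {u : Fin 5 → Fin 5 → ℤ} {x : Fin 5 → ℤ}

/-- With `u i j = (x i - x j) / p`, this is the condition on a subring `S` of `ℤ^4` under which
`β (x - x₀)(x - x₁) - α (x - x₄) r`, where `α = u₀₂ u₁₂` and `β = u₂₄ r₂ / p`, gives no information
on the image of the last pivot of `S` in a fifth coordinate. -/
def Resonant (p : ℕ) (u : Fin 5 → Fin 5 → ℤ) (S : Subring (Fin 4 → ℤ)) : Prop :=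
  ∀ r ∈ S, r 0 = 0 → r 1 = 0 →
    (p : ℤ) ^ 2 ∣ u 2 4 * (u 0 3 * u 1 3) * r 2 - u 0 2 * u 1 2 * u 3 4 * r 3

lemma eq_of_mul_eq_mul_of_not_dvd (hp : p.Prime) {α : ℕ} {u : ℤ} (hu : ¬ (p : ℤ) ∣ u)
    {y z : ZMod (p ^ α)} (h : (u : ZMod (p ^ α)) * y = u * z) : y = z := by
  have hpow := pow_mul_eq_zero_of_emultiplicity_le (m := 0) hp
    (emultiplicity_eq_zero.mpr hu).le (z := y - z) (by rw [mul_sub, h, sub_self])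
  rwa [pow_zero, one_mul, sub_eq_zero] at hpow

lemma eq_of_resonant_graphSubring (hp : p.Prime) (hu : ∀ i j, i < j → ¬ (p : ℤ) ∣ u i j)
    {T : Subring (Fin 3 → ℤ)} {α : ℕ} (hα : α = 2) {φ ψ : T →+* ZMod (p ^ α)}
    (hφ : Resonant p u (graphSubring φ)) (hψ : Resonant p u (graphSubring ψ))
    {r : T} (hr : ∀ l < 2, r.1 l = 0) : φ r = ψ r := by
  subst hα
  have hpi := Nat.prime_iff_prime_int.mp hp
  have hunit : ¬ (p : ℤ) ∣ u 0 2 * u 1 2 * u 3 4 :=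
    hpi.not_dvd_mul (hpi.not_dvd_mul (hu 0 2 (by decide)) (hu 1 2 (by decide))) (hu 3 4 (by decide))
  have key {φ : T →+* ZMod (p ^ 2)} (hφ : Resonant p u (graphSubring φ)) :
      ((u 0 2 * u 1 2 * u 3 4 : ℤ) : ZMod (p ^ 2)) * φ r =
        ((u 2 4 * (u 0 3 * u 1 3) * r.1 2 : ℤ) : ZMod (p ^ 2)) := by
    obtain ⟨t, ht⟩ := ZMod.intCast_surjective (φ r)
    have h := hφ _ (snoc_mem_graphSubring ht.symm) (hr 0 (by decide)) (hr 1 (by decide))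
    rw [← ht, ← Int.cast_mul, eq_comm, ← sub_eq_zero, ← Int.cast_sub,
      ZMod.intCast_zmod_eq_zero_iff_dvd, Nat.cast_pow]
    exact h
  exact eq_of_mul_eq_mul_of_not_dvd hp hunit ((key hφ).trans (key hψ).symm)

/-- The vector `β (x - x₀)(x - x₁) - α (x - x₄) r` is supported on the last coordinate, so it is
proportional to `g`, and its extension to a fifth coordinate does not depend on that of `r`. -/
lemma nonresonance_relation (hxu : ∀ i j, i < j → x i - x j = p * u i j) {r g : Fin 4 → ℤ}
    (hr0 : r 0 = 0) (hr1 : r 1 = 0) {t y w : ℤ} (ht : r 2 = p * t) (hy : r 3 = p * y)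
    (hg : ∀ l < 3, g l = 0) (hw : g 3 = p ^ 2 * w) (l : Fin 4) :
    (u 2 4 * (u 0 3 * u 1 3) * t - u 0 2 * u 1 2 * u 3 4 * y) * g l =
      w * (t * u 2 4 * ((x l.castSucc - x 0) * (x l.castSucc - x 1)) -
        u 0 2 * u 1 2 * ((x l.castSucc - x 4) * r l)) := by
  have hxu' (i j : Fin 5) (hij : i < j := by decide) : x j - x i = -(p * u i j) := by
    rw [← hxu i j hij, neg_sub]
  have hl : l = 0 ∨ l = 1 ∨ l = 2 ∨ l = 3 := by decide +revert
  rcases hl with rfl | rfl | rfl | rfl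
  · rw [hg 0 (by decide), hr0]
    simp
  · rw [hg 1 (by decide), hr1]
    simp
  · rw [hg 2 (by decide), ht, show Fin.castSucc (2 : Fin 4) = 2 by decide, hxu' 0 2, hxu' 1 2,
      hxu 2 4 (by decide)]
    ring
  · rw [hw, hy, show Fin.castSucc (3 : Fin 4) = 3 by decide, hxu' 0 3, hxu' 1 3,
      hxu 3 4 (by decide)]
    ring

lemma eq_of_not_resonant (hp : p.Prime) (hxu : ∀ i j, i < j → x i - x j = p * u i j) {α : ℕ}
    {a : Fin 4 → ℕ} {d : Fin 4 → Fin 4 → ℕ} {S : Subring (Fin 4 → ℤ)}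
    (hS : HasInvariants p a d S) (ha : a 3 = 2) (hd : ∀ i j, i < j → d i j = 1)
    (hSu : ¬ Resonant p u S) {φ ψ : S →+* ZMod (p ^ α)} (hxφ : x ∈ graphSubring φ)
    (hxψ : x ∈ graphSubring ψ) {g : S} (hg : ∀ l < 3, g.1 l = 0) : φ g = ψ g := by
  simp only [Resonant, not_forall] at hSu
  obtain ⟨r, hr, hr0, hr1, hndvd⟩ := hSu
  have hdvd (l : Fin 4) (hl : 0 < l) : (p : ℤ) ∣ r l := by
    simpa [hd 0 l hl, hr0] using hS.pow_contact_dvd hl.ne hr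
  obtain ⟨t, ht⟩ := hdvd 2 (by decide)
  obtain ⟨y, hy⟩ := hdvd 3 (by decide)
  obtain ⟨w, hw⟩ := ha ▸ hS.pow_pivot_dvd g.2 hg
  set κ := u 2 4 * (u 0 3 * u 1 3) * t - u 0 2 * u 1 2 * u 3 4 * y
  have hκp : ¬ (p : ℤ) ∣ κ := fun ⟨c, hc⟩ => hndvd ⟨c, by rw [ht, hy]; linear_combination p * hc⟩
  obtain ⟨hξ, hφξ⟩ := mem_graphSubring.mp hxφ
  obtain ⟨_, hψξ⟩ := mem_graphSubring.mp hxψ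
  set ξ : S := ⟨_, hξ⟩
  set ρ : S := ⟨r, hr⟩
  have hrel : (κ : S) * g = w * ((t * u 2 4 : ℤ) * ((ξ - (x 0 : S)) * (ξ - (x 1 : S))) -
      (u 0 2 * u 1 2 : ℤ) * ((ξ - (x 4 : S)) * ρ)) := by
    refine Subtype.ext (funext fun l => ?_)
    change κ * g.1 l = w * (t * u 2 4 * ((x l.castSucc - x 0) * (x l.castSucc - x 1)) -
      u 0 2 * u 1 2 * ((x l.castSucc - x 4) * r l))
    exact nonresonance_relation hxu hr0 hr1 ht hy hg hw l
  have key {φ : S →+* ZMod (p ^ α)} (hφξ : φ ξ = x 4) :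
      (κ : ZMod (p ^ α)) * φ g = w * ((t * u 2 4 : ℤ) *
        ((x 4 - x 0 : ℤ) * (x 4 - x 1 : ℤ))) := by
    have h := congrArg φ hrel
    simp only [map_mul, map_sub, map_intCast, hφξ] at h
    rw [h]
    push_cast
    ring
  exact eq_of_mul_eq_mul_of_not_dvd hp hκp ((key hφξ).trans (key hψξ).symm)

lemma card_le_one_of_forall_resonant (hp : p.Prime) (hu : ∀ i j, i < j → ¬ (p : ℤ) ∣ u i j)
    {a : Fin 4 → ℕ} {d : Fin 4 → Fin 4 → ℕ} {z : Fin 4 → ℤ} (hz : Generic p 0 d z) (ha : a 3 = 2)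
    {B : Finset (Subring (Fin 4 → ℤ))} (hB : ∀ S ∈ B, HasInvariants p a d S)
    (hzB : ∀ S ∈ B, z ∈ S) (hres : ∀ S ∈ B, Resonant p u S) : #B ≤ 1 := by
  classical
  rcases B.eq_empty_or_nonempty with rfl | ⟨S, hS⟩
  · simp
  have hadm := (hB S hS).admissible hp
  have hadm' := (hB S hS).map_initHom.admissible hp
  have hfiber (T : Subring (Fin 3 → ℤ)) : #{S ∈ B | S.map (initHom 3) = T} ≤ 1 := by
    refine (card_fiber_le_of_forall_agree hp (fun S hS => hB S (mem_filter.mp hS).1)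
      (fun S hS => (mem_filter.mp hS).2) 0 fun i φ ψ hT hφ hψ hagree r hr => ?_).trans_eq (by simp)
    replace hφ := (mem_filter.mp hφ).1
    replace hψ := (mem_filter.mp hψ).1
    have hfreedom := pow_freedom_mul_eq_zero hp hz hT (hB _ hφ) (hB _ hψ) (hzB _ hφ) (hzB _ hψ)
      hagree r hr
    have hcases : ∀ i : Fin 3, i = 0 ∨ i = 1 ∨ i = 2 := by decide
    rcases hcases i with rfl | rfl | rfl
    · simpa using hfreedom
    · simpa [Nat.le_zero.mp (freedom_one_le (s := 0) hadm _)] using hfreedom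
    · rw [eq_of_resonant_graphSubring hp hu ha (hres _ hφ) (hres _ hψ) hr, sub_self, mul_zero]
  have himage : #(B.image (Subring.map (initHom 3))) ≤ 1 := by
    refine (card_le_of_generic_mem hp hz.castSucc
      (forall_mem_image.mpr fun S hS => (hB S hS).map_initHom)
      (forall_mem_image.mpr fun S hS => ⟨z, hzB S hS, rfl⟩)).trans_eq ?_
    rw [sum_eq_zero fun j _ => sum_eq_zero fun i hi => ?_, pow_zero]
    have hcases : ∀ i j : Fin 3, i < j → i = 0 ∨ i = 1 := by decide
    rcases hcases i _ (mem_Iio.mp hi) with rfl | rfl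
    · exact freedom_zero _ _ _
    · exact Nat.le_zero.mp (freedom_one_le hadm' _)
  exact (card_le_mul_card_image B 1 fun T _ => hfiber T).trans (by omega)

lemma card_fiber_le_of_not_resonant (hp : p.Prime)
    (hxu : ∀ i j, i < j → x i - x j = p * u i j) {a : Fin 5 → ℕ} {d : Fin 5 → Fin 5 → ℕ}
    (hx : Generic p 0 d x) (hd : ∀ i j, i < j → d i j = 1) (ha : a 3 = 2)
    {S : Subring (Fin 4 → ℤ)} (hSu : ¬ Resonant p u S)
    {A : Finset (Subring (Fin 5 → ℤ))} (hA : ∀ R ∈ A, HasInvariants p a d R)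
    (hxA : ∀ R ∈ A, x ∈ R) (hAS : ∀ R ∈ A, R.map (initHom 4) = S) : #A ≤ p := by
  rcases A.eq_empty_or_nonempty with rfl | ⟨R, hR⟩
  · simp
  have hadm := (hA R hR).admissible hp
  refine (card_fiber_le_of_forall_agree hp hA hAS
    (Function.update (fun i => freedom 0 a d i.castSucc (Fin.last 4)) 3 0)
    fun i φ ψ hS hφ hψ hagree r hr => ?_).trans ?_
  · rcases eq_or_ne i 3 with rfl | hi
    · rw [eq_of_not_resonant hp hxu hS ha
        (fun i j hij => hd _ _ (Fin.castSucc_lt_castSucc_iff.mpr hij)) hSu (hxA _ hφ) (hxA _ hψ) hr,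
        sub_self, mul_zero]
    · rw [Function.update_of_ne hi]
      exact pow_freedom_mul_eq_zero hp hx hS (hA _ hφ) (hA _ hψ) (hxA _ hφ) (hxA _ hψ) hagree r hr
  · have htwo := freedom_le_contact_add 0 a d 2 4
    rw [hd 2 4 (by decide)] at htwo
    refine (Nat.pow_le_pow_right hp.pos ?_).trans_eq (pow_one p)
    rw [Fin.sum_univ_four]
    simpa [Function.update, Nat.le_zero.mp (freedom_one_le (s := 0) hadm _)] using htwo

lemma exists_quotients_of_generic {a : Fin 5 → ℕ} {d : Fin 5 → Fin 5 → ℕ} (hx : Generic p 0 d x)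
    (hd : ∀ i j, i < j → d i j = 1) {R : Subring (Fin 5 → ℤ)} (hR : HasInvariants p a d R)
    (hxR : x ∈ R) : ∃ u : Fin 5 → Fin 5 → ℤ,
      (∀ i j, i < j → x i - x j = p * u i j) ∧ ∀ i j, i < j → ¬ (p : ℤ) ∣ u i j := by
  have hdvd (i j : Fin 5) (hij : i < j) : (p : ℤ) ∣ x i - x j := by
    simpa [hd i j hij] using hR.pow_contact_dvd hij.ne hxR
  refine ⟨fun i j => (x i - x j) / p, fun i j hij => (Int.mul_ediv_cancel' (hdvd i j hij)).symm,
    fun i j hij h => ?_⟩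
  have hsq : (p : ℤ) ^ 2 ∣ x i - x j := by
    rw [sq, ← Int.mul_ediv_cancel' (hdvd i j hij)]
    exact mul_dvd_mul_left _ h
  have hlt := (pow_dvd_iff_le_emultiplicity.mp hsq).trans (hx hij)
  rw [hd i j hij, Nat.cast_le] at hlt
  omega

section Count

variable {a : Fin 5 → ℕ} {d : Fin 5 → Fin 5 → ℕ} {A : Finset (Subring (Fin 5 → ℤ))}

lemma card_le_sq_of_forall_resonant (hp : p.Prime) (hu : ∀ i j, i < j → ¬ (p : ℤ) ∣ u i j)
    (hx : Generic p 0 d x) (hd : ∀ i j, i < j → d i j = 1) (ha : a 3 = 2)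
    (hA : ∀ R ∈ A, HasInvariants p a d R) (hxA : ∀ R ∈ A, x ∈ R)
    (hres : ∀ R ∈ A, Resonant p u (R.map (initHom 4))) : #A ≤ p ^ 2 := by
  classical
  rcases A.eq_empty_or_nonempty with rfl | ⟨R, hR⟩
  · simp
  have himage : #(A.image (Subring.map (initHom 4))) ≤ 1 :=
    card_le_one_of_forall_resonant hp hu hx.castSucc ha
      (forall_mem_image.mpr fun R hR => (hA R hR).map_initHom)
      (forall_mem_image.mpr fun R hR => ⟨x, hxA R hR, rfl⟩) (forall_mem_image.mpr hres)
  have hexp : ∑ i : Fin 4, freedom 0 a d i.castSucc (Fin.last 4) ≤ 2 := by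
    have hone : freedom 0 a d 1 4 ≤ 0 := freedom_one_le ((hA R hR).admissible hp) 4
    have htwo := freedom_le_contact_add 0 a d 2 4
    have hthree := freedom_le_contact_add 0 a d 3 4
    rw [hd _ _ (by decide)] at htwo hthree
    rw [Fin.sum_univ_four]
    change freedom 0 a d 0 4 + freedom 0 a d 1 4 + freedom 0 a d 2 4 + freedom 0 a d 3 4 ≤ 2
    rw [freedom_zero]
    omega
  refine (card_le_mul_card_image A (p ^ 2) fun S _ => ?_).trans
    ((Nat.mul_le_mul_left _ himage).trans_eq (mul_one _))
  exact (card_fiber_le hp hx (fun R hR => hA R (mem_filter.mp hR).1)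
    (fun R hR => hxA R (mem_filter.mp hR).1) fun R hR => (mem_filter.mp hR).2).trans
      (Nat.pow_le_pow_right hp.pos hexp)

lemma card_le_sq_of_forall_not_resonant (hp : p.Prime)
    (hxu : ∀ i j, i < j → x i - x j = p * u i j)
    (hx : Generic p 0 d x) (hd : ∀ i j, i < j → d i j = 1) (ha : a 3 = 2)
    (hA : ∀ R ∈ A, HasInvariants p a d R) (hxA : ∀ R ∈ A, x ∈ R)
    (hres : ∀ R ∈ A, ¬ Resonant p u (R.map (initHom 4))) : #A ≤ p ^ 2 := by
  classical
  rcases A.eq_empty_or_nonempty with rfl | ⟨R, hR⟩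
  · simp
  have himage : #(A.image (Subring.map (initHom 4))) ≤ p := by
    refine (card_le_of_generic_mem hp hx.castSucc
      (forall_mem_image.mpr fun R hR => (hA R hR).map_initHom)
      (forall_mem_image.mpr fun R hR => ⟨x, hxA R hR, rfl⟩)).trans
      ((Nat.pow_le_pow_right hp.pos ?_).trans_eq (pow_one p))
    have hone := fun j => Nat.le_zero.mp (freedom_one_le (s := 0) ((hA R hR).admissible hp) j)
    have htwo := freedom_le_contact_add 0 a d 2 3
    rw [hd _ _ (by decide)] at htwo
    simp only [freedom_castSucc, Fin.sum_univ_four, show Iio (0 : Fin 4) = ∅ by decide,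
      show Iio (1 : Fin 4) = {0} by decide, show Iio (2 : Fin 4) = {0, 1} by decide,
      show Iio (3 : Fin 4) = {0, 1, 2} by decide]
    simpa [hone] using htwo
  refine (card_le_mul_card_image A p fun S hS => ?_).trans
    ((Nat.mul_le_mul_left _ himage).trans_eq (sq p).symm)
  obtain ⟨R, hR, rfl⟩ := mem_image.mp hS
  exact card_fiber_le_of_not_resonant hp hxu hx hd ha (hres R hR)
    (fun R hR => hA R (mem_filter.mp hR).1) (fun R hR => hxA R (mem_filter.mp hR).1)
    fun R hR => (mem_filter.mp hR).2

theorem card_le_two_mul_sq (hp : p.Prime) (hx : Generic p 0 d x)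
    (hd : ∀ i j, i < j → d i j = 1) (ha : a 3 = 2) (hA : ∀ R ∈ A, HasInvariants p a d R)
    (hxA : ∀ R ∈ A, x ∈ R) : #A ≤ 2 * p ^ 2 := by
  classical
  rcases A.eq_empty_or_nonempty with rfl | ⟨R, hR⟩
  · simp
  obtain ⟨u, hxu, hu⟩ := exists_quotients_of_generic hx hd (hA R hR) (hxA R hR)
  have hresonant : #{R ∈ A | Resonant p u (R.map (initHom 4))} ≤ p ^ 2 :=
    card_le_sq_of_forall_resonant hp hu hx hd ha (fun R hR => hA R (mem_filter.mp hR).1)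
      (fun R hR => hxA R (mem_filter.mp hR).1) fun R hR => (mem_filter.mp hR).2
  have hnonresonant : #{R ∈ A | ¬ Resonant p u (R.map (initHom 4))} ≤ p ^ 2 :=
    card_le_sq_of_forall_not_resonant hp hxu hx hd ha (fun R hR => hA R (mem_filter.mp hR).1)
      (fun R hR => hxA R (mem_filter.mp hR).1) fun R hR => (mem_filter.mp hR).2
  rw [← card_filter_add_card_filter_not (s := A) fun R => Resonant p u (R.map (initHom 4))]
  omega

end Count

end ContactOne

/-! ### Subrings of prime power index in five coordinates -/

section ClassBound

variable {p s : ℕ} {a : Fin 5 → ℕ} {d : Fin 5 → Fin 5 → ℕ} {x : Fin 5 → ℤ}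
  {A : Finset (Subring (Fin 5 → ℤ))}

lemma card_mul_pow_contact_le_of_generic (hp : p.Prime) (hx : Generic p s d x)
    (hA : ∀ R ∈ A, HasInvariants p a d R) (hxA : ∀ R ∈ A, x ∈ R) :
    #A * p ^ d 0 3 ≤ p ^ (8 * s) * p ^ weight d := by
  rcases A.eq_empty_or_nonempty with rfl | ⟨R, hR⟩
  · simp
  calc #A * p ^ d 0 3 ≤ p ^ (∑ j, ∑ i ∈ Iio j, freedom s a d i j) * p ^ d 0 3 :=
        Nat.mul_le_mul_right _ (card_le_of_generic_mem hp hx hA hxA)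
    _ = p ^ (∑ j, ∑ i ∈ Iio j, freedom s a d i j + d 0 3) := (pow_add ..).symm
    _ ≤ p ^ (weight d + 8 * s) :=
        Nat.pow_le_pow_right hp.pos (sum_freedom_add_le ((hA R hR).admissible hp))
    _ = p ^ (8 * s) * p ^ weight d := by rw [pow_add, mul_comm]

lemma card_mul_sq_le_of_generic (hp : p.Prime) (hx : Generic p 0 d x)
    (hmax : ∀ i j, i < j → d i j ≤ d 0 3) (hk : 2 ≤ ∑ j, a j)
    (hA : ∀ R ∈ A, HasInvariants p a d R) (hxA : ∀ R ∈ A, x ∈ R) :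
    #A * p ^ 2 ≤ 2 * p ^ weight d := by
  rcases A.eq_empty_or_nonempty with rfl | ⟨R, hR⟩
  · simp
  rcases sum_freedom_add_two_le_or ((hA R hR).admissible hp) hmax hk with hsum | ⟨hd, ha⟩
  · calc #A * p ^ 2 ≤ p ^ (∑ j, ∑ i ∈ Iio j, freedom 0 a d i j) * p ^ 2 :=
          Nat.mul_le_mul_right _ (card_le_of_generic_mem hp hx hA hxA)
      _ = p ^ (∑ j, ∑ i ∈ Iio j, freedom 0 a d i j + 2) := (pow_add ..).symm
      _ ≤ p ^ weight d := Nat.pow_le_pow_right hp.pos hsum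
      _ ≤ 2 * p ^ weight d := Nat.le_mul_of_pos_left _ two_pos
  · have hweight : weight d = 4 := by
      rw [weight_fin_five]
      simp [hd]
    calc #A * p ^ 2 ≤ 2 * p ^ 2 * p ^ 2 :=
          Nat.mul_le_mul_right _ (card_le_two_mul_sq hp hx hd ha hA hxA)
      _ = 2 * p ^ weight d := by rw [hweight]; ring

lemma Admissible.sum_pivot_le (h : Admissible a d) (hmax : ∀ i j, i < j → d i j ≤ d 0 3) :
    ∑ j, a j ≤ 10 * d 0 3 := by
  calc ∑ j, a j ≤ ∑ j : Fin 5, ∑ _i ∈ Iio j, d 0 3 :=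
        sum_le_sum fun j _ => (h.pivot_le j).trans <|
          sum_le_sum fun i hi => hmax i j (mem_Iio.mp hi)
    _ = 10 * d 0 3 := by
        rw [sum_sum_Iio_fin_five]
        ring

lemma card_mul_pow_le_of_eleven_le (hp : p.Prime) (hp11 : 11 ≤ p)
    (hmax : ∀ i j, i < j → d i j ≤ d 0 3) (hk : 2 ≤ ∑ j, a j)
    (hA : ∀ R ∈ A, HasInvariants p a d R) :
    #A * p ^ max 2 ((∑ j, a j) / 10) ≤ 22 * p ^ ∑ j, a j := by
  have hpairs : #(coordPairs 5) = 10 := card_coordPairs 5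
  have hbound := card_mul_pow_le_of_forall_generic (s := 0) (c := 2)
    (g := max 2 ((∑ j, a j) / 10)) hp hA (by rw [hpairs, zero_add, pow_one]; exact hp11) ?_
  · rwa [hpairs] at hbound
  intro x A' hx hA' hxA'
  rcases A'.eq_empty_or_nonempty with rfl | ⟨R, hR⟩
  · simp
  have hsum := ((hA' R hR).admissible hp).sum_pivot_le hmax
  rcases le_total ((∑ j, a j) / 10) 2 with hle | hge
  · rw [max_eq_left hle]
    exact card_mul_sq_le_of_generic hp hx hmax hk hA' hxA'
  · rw [max_eq_right hge]
    calc #A' * p ^ ((∑ j, a j) / 10) ≤ #A' * p ^ d 0 3 :=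
          Nat.mul_le_mul_left _ (Nat.pow_le_pow_right hp.pos (by omega))
      _ ≤ p ^ weight d := by simpa using card_mul_pow_contact_le_of_generic hp hx hA' hxA'
      _ ≤ 2 * p ^ weight d := Nat.le_mul_of_pos_left _ two_pos

lemma card_mul_pow_le_of_le_ten (hp : p.Prime) (hp10 : p ≤ 10)
    (hmax : ∀ i j, i < j → d i j ≤ d 0 3) (hA : ∀ R ∈ A, HasInvariants p a d R) :
    #A * p ^ max 2 ((∑ j, a j) / 10) ≤ 11 * 10 ^ 26 * p ^ ∑ j, a j := by
  rcases A.eq_empty_or_nonempty with rfl | ⟨R, hR⟩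
  · simp
  have hsum := ((hA R hR).admissible hp).sum_pivot_le hmax
  have hpairs : #(coordPairs 5) = 10 := card_coordPairs 5
  have hfour : 10 < p ^ (3 + 1) :=
    (by norm_num : 10 < 2 ^ (3 + 1)).trans_le (Nat.pow_le_pow_left hp.two_le _)
  have hbound : #A * p ^ d 0 3 ≤ 11 * 10 ^ 24 * p ^ ∑ j, a j := by
    have := card_mul_pow_le_of_forall_generic (s := 3) (c := 10 ^ 24) (g := d 0 3) hp hA
      (by rwa [hpairs]) fun x A' hx hA' hxA' =>
        (card_mul_pow_contact_le_of_generic hp hx hA' hxA').trans <|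
          Nat.mul_le_mul_right _ (Nat.pow_le_pow_left hp10 24)
    rwa [hpairs] at this
  calc #A * p ^ max 2 ((∑ j, a j) / 10) ≤ #A * p ^ (2 + d 0 3) :=
        Nat.mul_le_mul_left _ (Nat.pow_le_pow_right hp.pos (by omega))
    _ = p ^ 2 * (#A * p ^ d 0 3) := by ring
    _ ≤ 10 ^ 2 * (11 * 10 ^ 24 * p ^ ∑ j, a j) :=
        Nat.mul_le_mul (Nat.pow_le_pow_left hp10 2) hbound
    _ = 11 * 10 ^ 26 * p ^ ∑ j, a j := by ring

lemma card_mul_pow_le_of_hasInvariants (hp : p.Prime) (hmax : ∀ i j, i < j → d i j ≤ d 0 3)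
    (hk : 2 ≤ ∑ j, a j) (hA : ∀ R ∈ A, HasInvariants p a d R) :
    #A * p ^ max 2 ((∑ j, a j) / 10) ≤ 11 * 10 ^ 26 * p ^ ∑ j, a j := by
  rcases le_or_gt 11 p with hp11 | hp10
  · exact (card_mul_pow_le_of_eleven_le hp hp11 hmax hk hA).trans
      (Nat.mul_le_mul_right _ (by norm_num))
  · exact card_mul_pow_le_of_le_ten hp (Nat.le_of_lt_succ hp10) hmax hA

end ClassBound

section Permutations

variable {n p k : ℕ}

/-- The ring automorphism of `ℤ^n` permuting the coordinates by `σ`. -/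
def permHom (σ : Equiv.Perm (Fin n)) : (Fin n → ℤ) →+* (Fin n → ℤ) :=
  RingHom.pi fun i => Pi.evalRingHom _ (σ i)

lemma permHom_apply (σ : Equiv.Perm (Fin n)) (x : Fin n → ℤ) (i : Fin n) :
    permHom σ x i = x (σ i) := rfl

lemma permHom_surjective (σ : Equiv.Perm (Fin n)) : Function.Surjective (permHom σ) := fun y =>
  ⟨y ∘ σ.symm, funext fun i => by simp [permHom_apply]⟩

lemma comap_permHom_injective (σ : Equiv.Perm (Fin n)) :
    Function.Injective (Subring.comap (permHom σ)) := fun R S h => by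
  ext y
  obtain ⟨x, rfl⟩ := permHom_surjective σ y
  rw [← Subring.mem_comap, h, Subring.mem_comap]

lemma index_comap_permHom (σ : Equiv.Perm (Fin n)) (R : Subring (Fin n → ℤ)) :
    (R.comap (permHom σ)).toAddSubgroup.index = R.toAddSubgroup.index :=
  AddSubgroup.index_comap_of_surjective R.toAddSubgroup (f := (permHom σ).toAddMonoidHom)
    (permHom_surjective σ)

lemma map_coordSub_comap_permHom (σ : Equiv.Perm (Fin n)) (R : Subring (Fin n → ℤ)) (i j : Fin n) :
    (R.comap (permHom σ)).toAddSubgroup.map (coordSub (σ i) (σ j)) =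
      R.toAddSubgroup.map (coordSub i j) := by
  ext c
  constructor
  · rintro ⟨x, hx, rfl⟩
    exact ⟨permHom σ x, hx, rfl⟩
  · rintro ⟨y, hy, rfl⟩
    obtain ⟨x, rfl⟩ := permHom_surjective σ y
    exact ⟨x, hy, rfl⟩

lemma exists_perm_apply_zero_apply_three {i j : Fin 5} (hij : i ≠ j) :
    ∃ σ : Equiv.Perm (Fin 5), σ i = 0 ∧ σ j = 3 := by
  refine ⟨Equiv.swap 3 (Equiv.swap i 0 j) * Equiv.swap i 0, ?_⟩
  revert i j
  decide

lemma exists_perm_hasInvariants_max {R : Subring (Fin 5 → ℤ)} (hp : p.Prime)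
    (hR : R.toAddSubgroup.index = p ^ k) :
    ∃ (σ : Equiv.Perm (Fin 5)) (a : Fin 5 → ℕ) (d : Fin 5 → Fin 5 → ℕ),
      (∀ j, a j ≤ k) ∧ (∀ i j, d i j ≤ k) ∧ (∀ i j, i < j → d i j ≤ d 0 3) ∧
        HasInvariants p a d (R.comap (permHom σ)) := by
  obtain ⟨_, d, _, _, hd⟩ := exists_hasInvariants hp hR
  obtain ⟨⟨i₀, j₀⟩, hne, hmax⟩ := exists_max_image
    {t : Fin 5 × Fin 5 | t.1 ≠ t.2} (fun t => d t.1 t.2) ⟨(0, 1), by decide⟩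
  obtain ⟨σ, hσ₀, hσ₃⟩ := exists_perm_apply_zero_apply_three (mem_filter.mp hne).2
  obtain ⟨a, d', ha, hd', hinv⟩ := exists_hasInvariants hp ((index_comap_permHom σ R).trans hR)
  have hcontact {i j : Fin 5} (hij : i ≠ j) : d' (σ i) (σ j) = d i j := by
    have h := hinv.contact (σ.injective.ne hij)
    rw [map_coordSub_comap_permHom, hd.contact hij] at h
    exact le_antisymm
      (le_of_pow_dvd_pow hp (Int.mem_zmultiples_iff.mp (h ▸ AddSubgroup.mem_zmultiples _)))
      (le_of_pow_dvd_pow hp (Int.mem_zmultiples_iff.mp (h.symm ▸ AddSubgroup.mem_zmultiples _)))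
  refine ⟨σ, a, d', ha, hd', fun i j hij => ?_, hinv⟩
  have hij' : σ.symm i ≠ σ.symm j := σ.symm.injective.ne hij.ne
  calc d' i j = d (σ.symm i) (σ.symm j) := by simpa using hcontact hij'
    _ ≤ d i₀ j₀ := hmax (σ.symm i, σ.symm j) (mem_filter.mpr ⟨mem_univ _, hij'⟩)
    _ = d' 0 3 := by rw [← hσ₀, ← hσ₃, hcontact (mem_filter.mp hne).2]

end Permutations

section PrimePowerCount

variable {p k : ℕ}

lemma card_mul_le_of_forall_exists {α ι : Type*} {A : Finset α} {T : Finset ι} {P : ι → α → Prop}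
    {g c : ℕ} (hA : ∀ x ∈ A, ∃ t ∈ T, P t x)
    (hP : ∀ t, ∀ B : Finset α, (∀ x ∈ B, P t x) → #B * g ≤ c) : #A * g ≤ #T * c := by
  classical
  calc #A * g ≤ (∑ t ∈ T, #{x ∈ A | P t x}) * g := by
        refine Nat.mul_le_mul_right _ ((card_le_card fun x hx => ?_).trans card_biUnion_le)
        obtain ⟨t, ht, hPx⟩ := hA x hx
        exact mem_biUnion.mpr ⟨t, ht, mem_filter.mpr ⟨hx, hPx⟩⟩
    _ = ∑ t ∈ T, #{x ∈ A | P t x} * g := sum_mul ..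
    _ ≤ #T * c := sum_le_card_nsmul _ _ _ fun t _ => hP t _ fun x hx => (mem_filter.mp hx).2

theorem card_mul_pow_le_of_index_eq (hp : p.Prime) (hk : 2 ≤ k) {A : Finset (Subring (Fin 5 → ℤ))}
    (hA : ∀ R ∈ A, R.toAddSubgroup.index = p ^ k) :
    #A * p ^ max 2 (k / 10) ≤ 120 * (k + 1) ^ 30 * (11 * 10 ^ 26 * p ^ k) := by
  classical
  let T : Finset (Equiv.Perm (Fin 5) × (Fin 5 → ℕ) × (Fin 5 → Fin 5 → ℕ)) :=
    univ ×ˢ (Fintype.piFinset fun _ => range (k + 1)) ×ˢ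
      (Fintype.piFinset fun _ => Fintype.piFinset fun _ => range (k + 1))
  have hT : #T = 120 * (k + 1) ^ 30 := by
    simp only [T, card_product, card_univ, Fintype.card_perm, Fintype.card_piFinset, prod_const,
      Fintype.card_fin, card_range, ← pow_mul, ← pow_add]
    rfl
  rw [← hT]
  refine card_mul_le_of_forall_exists (P := fun t R => ∑ j, t.2.1 j = k ∧
      (∀ i j, i < j → t.2.2 i j ≤ t.2.2 0 3) ∧
        HasInvariants p t.2.1 t.2.2 (R.comap (permHom t.1))) (fun R hR => ?_) fun t B hB => ?_
  · obtain ⟨σ, a, d, ha, hd, hmax, hinv⟩ := exists_perm_hasInvariants_max hp (hA R hR)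
    refine ⟨(σ, a, d), ?_, ?_, hmax, hinv⟩
    · simpa [T, Nat.lt_succ_iff] using ⟨ha, hd⟩
    · have hindex := hinv.index_eq
      rw [index_comap_permHom, hA R hR] at hindex
      exact (Nat.pow_right_injective hp.two_le hindex).symm
  · rcases B.eq_empty_or_nonempty with rfl | ⟨R, hR⟩
    · simp
    obtain ⟨hsum, hmax, -⟩ := hB R hR
    rw [← card_image_of_injective B (comap_permHom_injective t.1), ← hsum]
    refine card_mul_pow_le_of_hasInvariants hp hmax (hsum ▸ hk) ?_
    simpa only [forall_mem_image] using fun S hS => (hB S hS).2.2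

theorem subringCount_pow_mul_le {n : ℕ} (hn : n ≤ 5) (hp : p.Prime) (hk : 2 ≤ k) :
    subringCount n (p ^ k) * p ^ max 2 (k / 10) ≤
      120 * (k + 1) ^ 30 * (11 * 10 ^ 26 * p ^ k) := by
  have hpos : 0 < p ^ k := pow_pos hp.pos k
  have hfin := finite_setOf_index_eq 5 hpos
  have hcard : subringCount 5 (p ^ k) = #hfin.toFinset := by
    rw [← Set.ncard_eq_toFinset_card _ hfin]
    rfl
  calc subringCount n (p ^ k) * p ^ max 2 (k / 10) ≤ #hfin.toFinset * p ^ max 2 (k / 10) :=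
        Nat.mul_le_mul_right _ ((subringCount_le_of_le hn hpos).trans_eq hcard)
    _ ≤ _ := card_mul_pow_le_of_index_eq hp hk fun R hR => hfin.mem_toFinset.mp hR

end PrimePowerCount

/-! ### Summatory functions of iterated convolutions with `ζ` -/

section LogSums

lemma succ_mul_pow_mul_sub_le {u v : ℝ} (hv : 0 ≤ v) (huv : v ≤ u) (j : ℕ) :
    (j + 1) * v ^ j * (u - v) ≤ u ^ (j + 1) - v ^ (j + 1) := by
  induction j with
  | zero => simp
  | succ j ih =>
    have hstep := mul_le_mul_of_nonneg_left ih hv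
    have hgrow : v * (u ^ (j + 1) - v ^ (j + 1)) ≤ u * (u ^ (j + 1) - v ^ (j + 1)) :=
      mul_le_mul_of_nonneg_right huv (sub_nonneg.mpr (pow_le_pow_left₀ hv huv _))
    push_cast
    linear_combination hstep + hgrow

lemma pow_succ_sub_pow_succ_le {u v : ℝ} (hv : 0 ≤ v) (huv : v ≤ u) (j : ℕ) :
    u ^ (j + 1) - v ^ (j + 1) ≤ (j + 1) * u ^ j * (u - v) := by
  have hu : 0 ≤ u := hv.trans huv
  have h := (le_abs_self _).trans (abs_pow_sub_pow_le u v (j + 1))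
  rw [abs_of_nonneg (sub_nonneg.mpr huv), abs_of_nonneg hu, abs_of_nonneg hv, max_eq_left huv,
    Nat.add_sub_cancel] at h
  push_cast at h
  linear_combination h

lemma log_div_sub_log_div_succ {x : ℝ} (hx : x ≠ 0) {N : ℕ} (hN : 1 ≤ N) :
    Real.log (x / N) - Real.log (x / (N + 1)) = Real.log ((N + 1) / N) := by
  have hN' : (N : ℝ) ≠ 0 := by positivity
  rw [Real.log_div hx hN', Real.log_div hx (by positivity), Real.log_div (by positivity) hN']
  ring

variable {j N : ℕ} {x : ℝ}

lemma log_div_succ_nonneg (hx : (N : ℝ) + 1 ≤ x) : 0 ≤ Real.log (x / (N + 1)) :=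
  Real.log_nonneg ((one_le_div (by positivity)).mpr hx)

lemma log_div_succ_le_log_div (hN : 1 ≤ N) (hx : (N : ℝ) + 1 ≤ x) :
    Real.log (x / (N + 1)) ≤ Real.log (x / N) := by
  have hx0 : 0 < x := by linarith [N.cast_nonneg (α := ℝ)]
  exact Real.log_le_log (by positivity) (by gcongr; linarith)

lemma log_div_succ_pow_div_le (hN : 1 ≤ N) (hx : (N : ℝ) + 1 ≤ x) :
    Real.log (x / (N + 1)) ^ j / (N + 1) ≤
      (Real.log (x / N) ^ (j + 1) - Real.log (x / (N + 1)) ^ (j + 1)) / (j + 1) := by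
  have hx0 : 0 < x := lt_of_lt_of_le (by positivity) hx
  have hv := log_div_succ_nonneg hx
  have hstep : 1 / ((N : ℝ) + 1) ≤ Real.log (x / N) - Real.log (x / (N + 1)) := by
    rw [log_div_sub_log_div_succ hx0.ne' hN]
    refine le_trans (le_of_eq ?_) (Real.one_sub_inv_le_log_of_pos (by positivity))
    field_simp
    ring
  rw [le_div_iff₀ (by positivity)]
  calc Real.log (x / (N + 1)) ^ j / (N + 1) * (j + 1)
      = (j + 1) * Real.log (x / (N + 1)) ^ j * (1 / (N + 1)) := by ring
    _ ≤ (j + 1) * Real.log (x / (N + 1)) ^ j * (Real.log (x / N) - Real.log (x / (N + 1))) := by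
        gcongr
    _ ≤ _ := succ_mul_pow_mul_sub_le hv (log_div_succ_le_log_div hN hx) j

lemma le_log_div_pow_div (hN : 1 ≤ N) (hx : (N : ℝ) + 1 ≤ x) :
    (Real.log (x / N) ^ (j + 1) - Real.log (x / (N + 1)) ^ (j + 1)) / (j + 1) ≤
      Real.log (x / N) ^ j / N := by
  have hx0 : 0 < x := lt_of_lt_of_le (by positivity) hx
  have hv := log_div_succ_nonneg hx
  have huv := log_div_succ_le_log_div hN hx
  have hu := hv.trans huv
  have hstep : Real.log (x / N) - Real.log (x / (N + 1)) ≤ 1 / N := by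
    rw [log_div_sub_log_div_succ hx0.ne' hN]
    refine (Real.log_le_sub_one_of_pos (by positivity)).trans_eq ?_
    field_simp
    ring
  rw [div_le_iff₀ (by positivity)]
  calc _ ≤ (j + 1) * Real.log (x / N) ^ j * (Real.log (x / N) - Real.log (x / (N + 1))) :=
        pow_succ_sub_pow_succ_le hv huv j
    _ ≤ (j + 1) * Real.log (x / N) ^ j * (1 / N) := by gcongr
    _ = Real.log (x / N) ^ j / N * (j + 1) := by ring

/-- The sum `∑_{1 ≤ m ≤ N} (log (x / m))^j / m`, a Riemann sum for `(log x)^(j+1) / (j+1)` when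
`N` is close to `x`. -/
noncomputable def logSum (j : ℕ) (x : ℝ) (N : ℕ) : ℝ := ∑ m ∈ Ioc 0 N, Real.log (x / m) ^ j / m

lemma logSum_succ (j : ℕ) (x : ℝ) (N : ℕ) :
    logSum j x (N + 1) = logSum j x N + Real.log (x / (N + 1)) ^ j / (N + 1) := by
  rw [logSum, sum_Ioc_succ_top (Nat.zero_le N), logSum]
  push_cast
  rfl

lemma logSum_le (hN : 1 ≤ N) (hx : (N : ℝ) ≤ x) :
    logSum j x N ≤
      (Real.log x ^ (j + 1) - Real.log (x / N) ^ (j + 1)) / (j + 1) + Real.log x ^ j := by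
  induction N, hN using Nat.le_induction with
  | base => simp [logSum]
  | succ N hN ih =>
    push_cast at hx ⊢
    rw [logSum_succ]
    linear_combination ih (by linarith) + log_div_succ_pow_div_le (j := j) hN hx

lemma le_logSum (hx : (N : ℝ) + 1 ≤ x) :
    (Real.log x ^ (j + 1) - Real.log (x / (N + 1)) ^ (j + 1)) / (j + 1) ≤ logSum j x N := by
  induction N with
  | zero => simp [logSum]
  | succ N ih =>
    have hterm := le_log_div_pow_div (j := j) (Nat.le_add_left 1 N) hx
    push_cast at hx hterm ⊢
    rw [logSum_succ]
    linear_combination ih (by linarith) + hterm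

lemma logSum_floor_le (hx : 1 ≤ x) :
    logSum j x ⌊x⌋₊ ≤ Real.log x ^ (j + 1) / (j + 1) + Real.log x ^ j := by
  have hfloor : (⌊x⌋₊ : ℝ) ≤ x := Nat.floor_le (zero_le_one.trans hx)
  have hpos : 1 ≤ ⌊x⌋₊ := Nat.one_le_floor_iff x |>.mpr hx
  have hlog : 0 ≤ Real.log (x / ⌊x⌋₊) :=
    Real.log_nonneg ((one_le_div (by exact_mod_cast hpos)).mpr hfloor)
  refine (logSum_le hpos hfloor).trans ?_
  gcongr
  exact sub_le_self _ (pow_nonneg hlog _)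

lemma le_logSum_floor (hx : 1 ≤ x) :
    (Real.log x ^ (j + 1) - 1) / (j + 1) ≤ logSum j x ⌊x⌋₊ := by
  obtain ⟨N, hN⟩ : ∃ N, ⌊x⌋₊ = N + 1 :=
    Nat.exists_eq_add_of_le' (Nat.one_le_floor_iff x |>.mpr hx)
  have hle : (N : ℝ) + 1 ≤ x := by
    exact_mod_cast hN ▸ Nat.floor_le (zero_le_one.trans hx)
  have hlt : x < N + 1 + 1 := by
    exact_mod_cast hN ▸ Nat.lt_floor_add_one x
  have hlog := log_div_succ_nonneg hle
  have hlog_le : Real.log (x / (N + 1)) ≤ 1 := by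
    refine (Real.log_le_sub_one_of_pos (by positivity)).trans ?_
    rw [sub_le_iff_le_add, div_le_iff₀ (by positivity)]
    linarith [N.cast_nonneg (α := ℝ)]
  calc (Real.log x ^ (j + 1) - 1) / (j + 1)
      ≤ (Real.log x ^ (j + 1) - Real.log (x / (N + 1)) ^ (j + 1)) / (j + 1) := by
        gcongr
        exact pow_le_one₀ hlog hlog_le
    _ ≤ logSum j x N := le_logSum hle
    _ ≤ logSum j x ⌊x⌋₊ := by
        rw [hN, logSum_succ]
        exact le_add_of_nonneg_right (by positivity)

lemma tendsto_logSum_floor_div (j : ℕ) :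
    Tendsto (fun x : ℝ => logSum j x ⌊x⌋₊ / Real.log x ^ (j + 1)) atTop (𝓝 (1 / (j + 1))) := by
  have hinv : Tendsto (fun x : ℝ => (Real.log x)⁻¹) atTop (𝓝 0) :=
    Real.tendsto_log_atTop.inv_tendsto_atTop
  have hlower : Tendsto (fun x : ℝ => (1 - (Real.log x)⁻¹ ^ (j + 1)) / ((j : ℝ) + 1)) atTop
      (𝓝 (1 / (j + 1))) := by
    simpa using ((hinv.pow (j + 1)).const_sub 1).div_const ((j : ℝ) + 1)
  have hupper : Tendsto (fun x : ℝ => 1 / ((j : ℝ) + 1) + (Real.log x)⁻¹) atTop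
      (𝓝 (1 / (j + 1))) := by
    simpa using hinv.const_add (1 / ((j : ℝ) + 1))
  have hlarge : ∀ᶠ x : ℝ in atTop, 1 ≤ x ∧ 0 < Real.log x :=
    (eventually_ge_atTop 1).and (Real.tendsto_log_atTop.eventually_gt_atTop 0)
  refine tendsto_of_tendsto_of_tendsto_of_le_of_le' hlower hupper ?_ ?_
  · filter_upwards [hlarge] with x ⟨hx, hlog⟩
    rw [le_div_iff₀ (by positivity)]
    refine (le_of_eq ?_).trans (le_logSum_floor hx)
    rw [inv_pow]
    field_simp
  · filter_upwards [hlarge] with x ⟨hx, hlog⟩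
    rw [div_le_iff₀ (by positivity)]
    refine (logSum_floor_le hx).trans_eq ?_
    field_simp
    ring

end LogSums

section Summatory

open scoped ArithmeticFunction.zeta

variable {f : ArithmeticFunction ℝ} {j : ℕ} {c : ℝ}

/-- The summatory function `∑_{1 ≤ m ≤ y} f m` of an arithmetic function. -/
noncomputable def summatory (f : ArithmeticFunction ℝ) (y : ℝ) : ℝ := ∑ m ∈ Ioc 0 ⌊y⌋₊, f m

lemma summatory_zeta_mul (f : ArithmeticFunction ℝ) (x : ℝ) :
    summatory ((ζ : ArithmeticFunction ℝ) * f) x = ∑ m ∈ Ioc 0 ⌊x⌋₊, summatory f (x / m) := by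
  rw [summatory, ArithmeticFunction.sum_Ioc_mul_eq_sum_sum]
  refine sum_congr rfl fun m hm => ?_
  have hm0 : m ≠ 0 := (mem_Ioc.mp hm).1.ne'
  simp [summatory, Nat.floor_div_natCast, ArithmeticFunction.natCoe_apply,
    ArithmeticFunction.zeta_apply, hm0]

lemma abs_summatory_le (f : ArithmeticFunction ℝ) {y Y : ℝ} (h : y ≤ Y) :
    |summatory f y| ≤ ∑ m ∈ Ioc 0 ⌊Y⌋₊, |f m| :=
  (abs_sum_le_sum_abs _ _).trans <|
    sum_le_sum_of_subset_of_nonneg (Ioc_subset_Ioc_right (Nat.floor_le_floor h))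
      fun _ _ _ => abs_nonneg _

lemma exists_forall_abs_summatory_sub_le
    (h : Tendsto (fun y : ℝ => summatory f y / (y * Real.log y ^ j)) atTop (𝓝 c)) {ε : ℝ}
    (hε : 0 < ε) :
    ∃ D, 0 ≤ D ∧ ∀ y, 1 ≤ y →
      |summatory f y - c * (y * Real.log y ^ j)| ≤ ε * (y * Real.log y ^ j) + D := by
  obtain ⟨Y, hY⟩ := eventually_atTop.mp
    ((Metric.tendsto_nhds.mp h ε hε).and (eventually_gt_atTop 1))
  have hlogY : 0 ≤ Real.log Y := Real.log_nonneg (hY Y le_rfl).2.le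
  have hY0 : 0 ≤ Y := zero_le_one.trans (hY Y le_rfl).2.le
  have hD : 0 ≤ ∑ m ∈ Ioc 0 ⌊Y⌋₊, |f m| + |c| * (Y * Real.log Y ^ j) := by positivity
  refine ⟨_, hD, fun y hy => ?_⟩
  have hlog : 0 ≤ Real.log y := Real.log_nonneg hy
  have hmain : 0 ≤ y * Real.log y ^ j := by positivity
  rcases le_or_gt Y y with hYy | hyY
  · obtain ⟨hdist, hy1⟩ := hY y hYy
    have hpos : 0 < y * Real.log y ^ j := by
      have := Real.log_pos hy1
      positivity
    rw [Real.dist_eq, div_sub' hpos.ne', abs_div, abs_of_pos hpos, div_lt_iff₀ hpos,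
      mul_comm _ c] at hdist
    exact le_add_of_le_of_nonneg hdist.le hD
  · have hbase : |c * (y * Real.log y ^ j)| ≤ |c| * (Y * Real.log Y ^ j) := by
      rw [abs_mul, abs_of_nonneg hmain]
      gcongr
    linarith [abs_sub (summatory f y) (c * (y * Real.log y ^ j)), abs_summatory_le f hyY.le,
      mul_nonneg hε.le hmain]

lemma sum_div_mul_log_pow (b : ℝ) (j : ℕ) (x : ℝ) :
    ∑ m ∈ Ioc 0 ⌊x⌋₊, b * (x / m * Real.log (x / m) ^ j) = b * (x * logSum j x ⌊x⌋₊) := by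
  rw [logSum, mul_sum, mul_sum]
  exact sum_congr rfl fun m _ => by ring

lemma abs_summatory_zeta_mul_sub_le {ε D x : ℝ} (hD : 0 ≤ D) (hx : 1 ≤ x)
    (h : ∀ y, 1 ≤ y →
      |summatory f y - c * (y * Real.log y ^ j)| ≤ ε * (y * Real.log y ^ j) + D) :
    |summatory ((ζ : ArithmeticFunction ℝ) * f) x - c * (x * logSum j x ⌊x⌋₊)| ≤
      ε * (x * logSum j x ⌊x⌋₊) + D * x := by
  have hx0 : 0 ≤ x := zero_le_one.trans hx
  rw [summatory_zeta_mul, ← sum_div_mul_log_pow, ← sum_sub_distrib]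
  calc _ ≤ ∑ m ∈ Ioc 0 ⌊x⌋₊, |summatory f (x / m) - c * (x / m * Real.log (x / m) ^ j)| :=
        abs_sum_le_sum_abs _ _
    _ ≤ ∑ m ∈ Ioc 0 ⌊x⌋₊, (ε * (x / m * Real.log (x / m) ^ j) + D) := by
        refine sum_le_sum fun m hm => h _ ?_
        obtain ⟨hm0, hmx⟩ := mem_Ioc.mp hm
        exact (one_le_div (by exact_mod_cast hm0)).mpr ((Nat.le_floor_iff hx0).mp hmx)
    _ = ε * (x * logSum j x ⌊x⌋₊) + D * ⌊x⌋₊ := by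
        rw [sum_add_distrib, sum_div_mul_log_pow]
        simp [mul_comm]
    _ ≤ ε * (x * logSum j x ⌊x⌋₊) + D * x := by
        gcongr
        exact Nat.floor_le hx0

lemma tendsto_summatory_zeta_mul
    (h : Tendsto (fun y : ℝ => summatory f y / (y * Real.log y ^ j)) atTop (𝓝 c)) :
    Tendsto (fun x : ℝ => summatory ((ζ : ArithmeticFunction ℝ) * f) x /
      (x * Real.log x ^ (j + 1))) atTop (𝓝 (c / (j + 1))) := by
  have hlogSum := tendsto_logSum_floor_div j
  have hmain := hlogSum.const_mul c
  rw [mul_one_div] at hmain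
  refine hmain.congr_dist (Metric.tendsto_nhds.mpr fun ε hε => ?_)
  obtain ⟨D, hD, happrox⟩ := exists_forall_abs_summatory_sub_le h (half_pos hε)
  have herror : Tendsto (fun x : ℝ => ε / 2 * (logSum j x ⌊x⌋₊ / Real.log x ^ (j + 1)) +
      D * (Real.log x)⁻¹ ^ (j + 1)) atTop (𝓝 (ε / 2 * (1 / (j + 1)))) := by
    simpa using (hlogSum.const_mul (ε / 2)).add
      ((Real.tendsto_log_atTop.inv_tendsto_atTop.pow (j + 1)).const_mul D)
  have hlt : ε / 2 * (1 / ((j : ℝ) + 1)) < ε := by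
    have : 1 / ((j : ℝ) + 1) ≤ 1 := div_le_one_of_le₀ (by simp) (by positivity)
    nlinarith
  filter_upwards [eventually_ge_atTop 1, Real.tendsto_log_atTop.eventually_gt_atTop 0,
    herror.eventually_lt_const hlt] with x hx hlog hsmall
  have hpos : 0 < x * Real.log x ^ (j + 1) := by positivity
  rw [Real.dist_0_eq_abs, abs_of_nonneg dist_nonneg, dist_comm, Real.dist_eq]
  refine lt_of_le_of_lt ?_ hsmall
  have hbound := abs_summatory_zeta_mul_sub_le hD hx happrox
  rw [← div_le_div_iff_of_pos_right hpos, ← abs_of_pos hpos, ← abs_div, abs_of_pos hpos] at hbound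
  convert hbound using 1
  · congr 1
    field_simp
  · rw [inv_pow]
    field_simp

lemma tendsto_summatory_zeta_mul_of_summable (hf : Summable fun m : ℕ => |f m| / m) :
    Tendsto (fun x : ℝ => summatory ((ζ : ArithmeticFunction ℝ) * f) x / x) atTop
      (𝓝 (∑' m : ℕ, f m / m)) := by
  have hsum (x : ℝ) : ∑' m : ℕ, f m * (⌊x / m⌋₊ / x) =
      summatory ((ζ : ArithmeticFunction ℝ) * f) x / x := by
    rw [mul_comm _ f, summatory, ArithmeticFunction.sum_Ioc_mul_zeta_eq_sum, sum_div,
      tsum_eq_sum (s := Ioc 0 ⌊x⌋₊)]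
    · exact sum_congr rfl fun m _ => by rw [Nat.floor_div_natCast, mul_div_assoc]
    · intro m hm
      rcases m.eq_zero_or_pos with rfl | hm0
      · simp
      · have hlt : ⌊x⌋₊ < m := by simpa [hm0] using hm
        simp [Nat.floor_div_natCast, Nat.div_eq_of_lt hlt]
  refine Tendsto.congr hsum (tendsto_tsum_of_dominated_convergence hf (fun m => ?_) ?_)
  · simpa only [one_div_mul_eq_div, mul_one_div] using
      (tendsto_nat_floor_mul_div_atTop (R := ℝ) (a := 1 / (m : ℝ)) (by positivity)).const_mul (f m)
  · filter_upwards [eventually_ge_atTop 1] with x hx m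
    have hx0 : 0 < x := zero_lt_one.trans_le hx
    have hfloor : (⌊x / m⌋₊ : ℝ) / x ≤ (m : ℝ)⁻¹ := by
      rw [div_le_iff₀ hx0, inv_mul_eq_div]
      exact Nat.floor_le (by positivity)
    rw [Real.norm_eq_abs, abs_mul, abs_of_nonneg (a := (⌊x / m⌋₊ : ℝ) / x) (by positivity),
      div_eq_mul_inv |f m|]
    gcongr

theorem tendsto_summatory_zeta_pow_mul (hf : Summable fun m : ℕ => |f m| / m) (j : ℕ) :
    Tendsto (fun x : ℝ => summatory ((ζ : ArithmeticFunction ℝ) ^ (j + 1) * f) x /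
      (x * Real.log x ^ j)) atTop (𝓝 ((∑' m : ℕ, f m / m) / j.factorial)) := by
  induction j with
  | zero => simpa using tendsto_summatory_zeta_mul_of_summable hf
  | succ j ih =>
    convert tendsto_summatory_zeta_mul ih using 2
    · rw [← mul_assoc, ← pow_succ']
    · rw [Nat.factorial_succ, div_div]
      push_cast
      ring

end Summatory

/-! ### Euler products and the order of the pole -/

section EulerProduct

variable {G : ℕ → ℝ}

lemma summable_norm_primePow (hG : Summable fun x : Nat.Primes × ℕ => ‖G (x.1 ^ (x.2 + 1))‖) {p : ℕ}
    (hp : p.Prime) : Summable fun e : ℕ => ‖G (p ^ e)‖ :=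
  (summable_nat_add_iff 1).mp <|
    hG.comp_injective (i := fun e : ℕ => ((⟨p, hp⟩ : Nat.Primes), e)) fun _ _ h => by simpa using h

lemma sum_range_le_prod_primesBelow (hG1 : G 1 = 1) (hG0 : G 0 = 0) (hnonneg : ∀ m, 0 ≤ G m)
    (hmul : ∀ {m n : ℕ}, m.Coprime n → G (m * n) = G m * G n)
    (hG : Summable fun x : Nat.Primes × ℕ => ‖G (x.1 ^ (x.2 + 1))‖) (N : ℕ) :
    ∑ m ∈ range N, G m ≤ ∏ p ∈ N.primesBelow, ∑' e, G (p ^ e) := by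
  obtain ⟨-, hprod⟩ := EulerProduct.summable_and_hasSum_smoothNumbers_prod_primesBelow_tsum
    hG1 hmul (summable_norm_primePow hG) N
  have hindicator := hasSum_subtype_iff_indicator.mp hprod
  calc ∑ m ∈ range N, G m = ∑ m ∈ range N, (N.smoothNumbers : Set ℕ).indicator G m := by
        refine sum_congr rfl fun m hm => ?_
        rcases m.eq_zero_or_pos with rfl | hm0
        · simp [hG0, Set.indicator]
        · rw [Set.indicator_of_mem (Nat.mem_smoothNumbers_of_lt hm0 (mem_range.mp hm))]
    _ ≤ ∏ p ∈ N.primesBelow, ∑' e, G (p ^ e) :=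
        sum_le_hasSum _ (fun m _ => Set.indicator_nonneg (fun m _ => hnonneg m) m) hindicator

theorem summable_of_summable_primePow (hG1 : G 1 = 1) (hG0 : G 0 = 0) (hnonneg : ∀ m, 0 ≤ G m)
    (hmul : ∀ {m n : ℕ}, m.Coprime n → G (m * n) = G m * G n)
    (hG : Summable fun x : Nat.Primes × ℕ => ‖G (x.1 ^ (x.2 + 1))‖) : Summable G := by
  have hlocal_nonneg (p : ℕ) : 0 ≤ ∑' e, ‖G (p ^ (e + 1))‖ := tsum_nonneg fun _ => norm_nonneg _
  have hlocal (T : Finset Nat.Primes) :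
      ∑ p ∈ T, ∑' e, ‖G (p ^ (e + 1))‖ ≤ ∑' p : Nat.Primes, ∑' e, ‖G (p ^ (e + 1))‖ :=
    Summable.sum_le_tsum T (fun p _ => hlocal_nonneg p) hG.prod
  refine summable_of_sum_range_le
    (c := Real.exp (∑' p : Nat.Primes, ∑' e, ‖G (p ^ (e + 1))‖)) hnonneg fun N => ?_
  calc ∑ m ∈ range N, G m ≤ ∏ p ∈ N.primesBelow, ∑' e, G (p ^ e) :=
        sum_range_le_prod_primesBelow hG1 hG0 hnonneg hmul hG N
    _ = ∏ p ∈ N.primesBelow, (1 + ∑' e, ‖G (p ^ (e + 1))‖) := by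
        refine prod_congr rfl fun p hp => ?_
        have hsum := summable_norm_primePow hG (Nat.prime_of_mem_primesBelow hp)
        rw [hsum.of_norm.tsum_eq_zero_add, pow_zero, hG1]
        simp only [Real.norm_of_nonneg (hnonneg _)]
    _ ≤ Real.exp (∑ p ∈ N.primesBelow, ∑' e, ‖G (p ^ (e + 1))‖) :=
        Real.prod_one_add_le_exp_sum _ hlocal_nonneg
    _ = Real.exp (∑ p ∈ N.primesBelow.subtype Nat.Prime, ∑' e, ‖G (p ^ (e + 1))‖) := by
        rw [sum_subtype_of_mem (fun p => ∑' e, ‖G (p ^ (e + 1))‖)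
          fun p hp => Nat.prime_of_mem_primesBelow hp]
    _ ≤ Real.exp (∑' p : Nat.Primes, ∑' e, ‖G (p ^ (e + 1))‖) :=
        Real.exp_le_exp.mpr (hlocal _)

theorem tsum_pos_of_forall_prime_tsum_pos (hG1 : G 1 = 1) (hG0 : G 0 = 0)
    (hmul : ∀ {m n : ℕ}, m.Coprime n → G (m * n) = G m * G n) (hG : Summable fun m => ‖G m‖)
    (hpos : ∀ p : ℕ, p.Prime → 0 < ∑' e, G (p ^ e)) : 0 < ∑' m, G m := by
  have hpow : Summable fun x : Nat.Primes × ℕ => ‖G (x.1 ^ (x.2 + 1))‖ :=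
    hG.comp_injective
      (i := fun x : Nat.Primes × ℕ => (Nat.Primes.prodNatEquiv x : ℕ))
      (Subtype.val_injective.comp Nat.Primes.prodNatEquiv.injective)
  have hlocal (p : Nat.Primes) : ∑' e, G (p ^ e) = 1 + ∑' e, G (p ^ (e + 1)) := by
    rw [(summable_norm_primePow hpow p.2).of_norm.tsum_eq_zero_add, pow_zero, hG1]
  rw [← EulerProduct.eulerProduct_tprod hG1 hmul hG hG0,
    ← Real.rexp_tsum_eq_tprod fun p : Nat.Primes => hpos p p.2]
  · exact Real.exp_pos _
  · simp_rw [hlocal]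
    exact Real.summable_log_one_add_of_summable hpow.of_norm.prod

end EulerProduct

section ZetaPower

open scoped ArithmeticFunction.zeta ArithmeticFunction.Moebius

variable {f : ArithmeticFunction ℝ} {κ : ℝ} {p : ℕ}

/-- The term `f(p^e) / p^e` of the Euler factor at `p` of the Dirichlet series of `f` at `1`. -/
noncomputable def eulerTerm (f : ArithmeticFunction ℝ) (p e : ℕ) : ℝ := f (p ^ e) / (p : ℝ) ^ e

/-- The Dirichlet series of `f` behaves like `ζ(s)^κ` near `s = 1`: `f` is multiplicative, takes the
value `κ` at every prime, its normalized values at higher prime powers are summable, and its Euler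
factors at `1` are positive. -/
structure IsZetaPowerLike (f : ArithmeticFunction ℝ) (κ : ℝ) : Prop where
  isMultiplicative : f.IsMultiplicative
  apply_prime {p : ℕ} (hp : p.Prime) : f p = κ
  summable_eulerTerm : Summable fun x : Nat.Primes × ℕ => |eulerTerm f x.1 (x.2 + 2)|
  tsum_eulerTerm_pos {p : ℕ} (hp : p.Prime) : 0 < ∑' e, eulerTerm f p e

lemma eulerTerm_zero (hf : f.IsMultiplicative) (p : ℕ) : eulerTerm f p 0 = 1 := by
  simp [eulerTerm, hf.1]

lemma eulerTerm_one (f : ArithmeticFunction ℝ) (p : ℕ) : eulerTerm f p 1 = f p / p := by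
  simp [eulerTerm]

lemma summable_eulerTerm_of_summable_primePow
    (hf : Summable fun x : Nat.Primes × ℕ => |eulerTerm f x.1 (x.2 + 2)|) (hp : p.Prime) :
    Summable fun e => eulerTerm f p e := by
  rw [← summable_nat_add_iff 2]
  exact (hf.comp_injective (i := fun e : ℕ => ((⟨p, hp⟩ : Nat.Primes), e))
    fun _ _ h => by simpa using h).of_abs

lemma zeta_mul_moebius_mul (f : ArithmeticFunction ℝ) :
    (ζ : ArithmeticFunction ℝ) * ((μ : ArithmeticFunction ℝ) * f) = f := by
  rw [← mul_assoc, ArithmeticFunction.coe_zeta_mul_coe_moebius, one_mul]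

lemma moebius_mul_apply_prime_pow_succ (f : ArithmeticFunction ℝ) (hp : p.Prime) (e : ℕ) :
    ((μ : ArithmeticFunction ℝ) * f) (p ^ (e + 1)) = f (p ^ (e + 1)) - f (p ^ e) := by
  have hsum (k : ℕ) :
      f (p ^ k) = ∑ i ∈ range (k + 1), ((μ : ArithmeticFunction ℝ) * f) (p ^ i) := by
    conv_lhs => rw [← zeta_mul_moebius_mul f, ArithmeticFunction.coe_zeta_mul_apply]
    rw [Nat.sum_divisors_prime_pow hp]
  rw [hsum (e + 1), hsum e, sum_range_succ _ (e + 1), add_sub_cancel_left]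

lemma eulerTerm_moebius_mul_succ (f : ArithmeticFunction ℝ) (hp : p.Prime) (e : ℕ) :
    eulerTerm ((μ : ArithmeticFunction ℝ) * f) p (e + 1) =
      eulerTerm f p (e + 1) - eulerTerm f p e / p := by
  rw [eulerTerm, moebius_mul_apply_prime_pow_succ f hp, eulerTerm, eulerTerm, sub_div, div_div,
    ← pow_succ]

lemma isMultiplicative_moebius_mul (hf : f.IsMultiplicative) :
    ((μ : ArithmeticFunction ℝ) * f).IsMultiplicative :=
  ArithmeticFunction.isMultiplicative_moebius.intCast.mul hf

lemma tsum_eulerTerm_moebius_mul (hf : f.IsMultiplicative) (hp : p.Prime)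
    (hs : Summable fun e => eulerTerm f p e) :
    ∑' e, eulerTerm ((μ : ArithmeticFunction ℝ) * f) p e =
      (1 - 1 / (p : ℝ)) * ∑' e, eulerTerm f p e := by
  have hs_succ : Summable fun e => eulerTerm f p (e + 1) := (summable_nat_add_iff 1).mpr hs
  have hs_moebius : Summable fun e => eulerTerm ((μ : ArithmeticFunction ℝ) * f) p e := by
    rw [← summable_nat_add_iff 1]
    simpa only [eulerTerm_moebius_mul_succ f hp] using hs_succ.sub (hs.div_const _)
  have htail := hs.tsum_eq_zero_add
  rw [eulerTerm_zero hf] at htail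
  rw [hs_moebius.tsum_eq_zero_add, eulerTerm_zero (isMultiplicative_moebius_mul hf)]
  simp only [eulerTerm_moebius_mul_succ f hp]
  rw [hs_succ.tsum_sub (hs.div_const _), tsum_div_const]
  linear_combination -htail

lemma summable_prod_nat_of_summable_zero_of_summable_succ {ι : Type*} {F : ι × ℕ → ℝ}
    (hzero : Summable fun i => F (i, 0)) (hsucc : Summable fun x : ι × ℕ => F (x.1, x.2 + 1)) :
    Summable F := by
  have hinj_zero : Function.Injective fun i : ι => (i, 0) := Prod.mk_left_injective 0
  have hinj_succ : Function.Injective fun x : ι × ℕ => (x.1, x.2 + 1) :=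
    Function.injective_id.prodMap (add_left_injective 1)
  have hcompl : IsCompl (Set.range fun i : ι => (i, 0))
      (Set.range fun x : ι × ℕ => (x.1, x.2 + 1)) := by
    refine eq_compl_iff_isCompl.mp ?_
    ext ⟨i, e⟩
    cases e <;> simp
  exact ((hinj_zero.hasSum_range_iff.mpr hzero.hasSum).add_isCompl hcompl
    (hinj_succ.hasSum_range_iff.mpr hsucc.hasSum)).summable

lemma summable_primes_one_div_sq : Summable fun p : Nat.Primes => 1 / (p : ℝ) ^ 2 :=
  (Real.summable_one_div_nat_pow.mpr one_lt_two).comp_injective Subtype.val_injective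

namespace IsZetaPowerLike

lemma summable_eulerTerm_succ_div (h : IsZetaPowerLike f κ) :
    Summable fun x : Nat.Primes × ℕ => |eulerTerm f x.1 (x.2 + 1)| / x.1 := by
  refine summable_prod_nat_of_summable_zero_of_summable_succ ?_ ?_
  · refine (summable_primes_one_div_sq.mul_left |κ|).congr fun p => ?_
    rw [zero_add, eulerTerm_one, h.apply_prime p.2, abs_div, Nat.abs_cast]
    ring
  · refine h.summable_eulerTerm.of_nonneg_of_le (fun x => by positivity) fun x => ?_
    exact div_le_self (abs_nonneg _) (by exact_mod_cast x.1.2.one_le)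

lemma moebius_mul (h : IsZetaPowerLike f κ) :
    IsZetaPowerLike ((μ : ArithmeticFunction ℝ) * f) (κ - 1) where
  isMultiplicative := isMultiplicative_moebius_mul h.isMultiplicative
  apply_prime {p} hp := by
    simpa [h.apply_prime hp, h.isMultiplicative.1] using moebius_mul_apply_prime_pow_succ f hp 0
  summable_eulerTerm := by
    refine (h.summable_eulerTerm.add h.summable_eulerTerm_succ_div).of_nonneg_of_le
      (fun x => abs_nonneg _) fun x => ?_
    rw [eulerTerm_moebius_mul_succ f x.1.2 (x.2 + 1)]
    refine (abs_sub _ _).trans_eq ?_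
    rw [abs_div, Nat.abs_cast]
  tsum_eulerTerm_pos {p} hp := by
    rw [tsum_eulerTerm_moebius_mul h.isMultiplicative hp
      (summable_eulerTerm_of_summable_primePow h.summable_eulerTerm hp)]
    refine mul_pos ?_ (h.tsum_eulerTerm_pos hp)
    rw [sub_pos, one_div]
    exact inv_lt_one_of_one_lt₀ (by exact_mod_cast hp.one_lt)

lemma moebius_pow_mul (h : IsZetaPowerLike f κ) (i : ℕ) :
    IsZetaPowerLike ((μ : ArithmeticFunction ℝ) ^ i * f) (κ - i) := by
  induction i with
  | zero => simpa using h
  | succ i ih =>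
    convert ih.moebius_mul using 1
    · rw [← mul_assoc, ← pow_succ']
    · push_cast
      ring

lemma summable_abs_div (h : IsZetaPowerLike f 0) : Summable fun m : ℕ => |f m| / m := by
  refine summable_of_summable_primePow (by simp [h.isMultiplicative.1]) (by simp)
    (fun m => by positivity) (fun {m n} hmn => ?_) ?_
  · rw [h.isMultiplicative.2 hmn, abs_mul, Nat.cast_mul, mul_div_mul_comm]
  · refine (summable_prod_nat_of_summable_zero_of_summable_succ
      (F := fun x : Nat.Primes × ℕ => |eulerTerm f x.1 (x.2 + 1)|) ?_ h.summable_eulerTerm).congr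
      fun x => ?_
    · exact summable_zero.congr fun p => by simp [eulerTerm_one, h.apply_prime p.2]
    · simp [eulerTerm, abs_div]

lemma tsum_div_pos (h : IsZetaPowerLike f 0) : 0 < ∑' m : ℕ, f m / m := by
  refine tsum_pos_of_forall_prime_tsum_pos (by simp [h.isMultiplicative.1]) (by simp)
    (fun {m n} hmn => ?_) (h.summable_abs_div.congr fun m => by simp) fun p hp => ?_
  · rw [h.isMultiplicative.2 hmn, Nat.cast_mul, mul_div_mul_comm]
  · simpa [eulerTerm] using h.tsum_eulerTerm_pos hp

theorem exists_tendsto_summatory_div {k : ℕ} (h : IsZetaPowerLike f (k + 1 : ℕ)) :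
    ∃ C : ℝ, 0 < C ∧
      Tendsto (fun x : ℝ => summatory f x / (x * Real.log x ^ k)) atTop (𝓝 C) := by
  have hg := h.moebius_pow_mul (k + 1)
  rw [sub_self] at hg
  have hfg : (ζ : ArithmeticFunction ℝ) ^ (k + 1) * ((μ : ArithmeticFunction ℝ) ^ (k + 1) * f) =
      f := by
    rw [← mul_assoc, ← mul_pow, ArithmeticFunction.coe_zeta_mul_coe_moebius, one_pow, one_mul]
  have hlim := tendsto_summatory_zeta_pow_mul hg.summable_abs_div k
  rw [hfg] at hlim
  exact ⟨_, div_pos hg.tsum_div_pos (by positivity), hlim⟩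

end IsZetaPowerLike

end ZetaPower

/-! ### Subrings of `ℤⁿ` with `n ≤ 5` -/

section SubringSeries

variable {n p : ℕ}

/-- The counting function `r ↦ f_n(r)` as an arithmetic function. Arithmetic functions vanish at
`0`, whereas `subringCount n 0` counts the subrings of infinite index. -/
noncomputable def subringArith (n : ℕ) : ArithmeticFunction ℝ :=
  ⟨fun r => if r = 0 then 0 else (subringCount n r : ℝ), if_pos rfl⟩

lemma subringArith_apply (n : ℕ) {r : ℕ} (hr : r ≠ 0) : subringArith n r = subringCount n r :=
  if_neg hr

lemma eulerTerm_subringArith (n : ℕ) (hp : p ≠ 0) (e : ℕ) :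
    eulerTerm (subringArith n) p e = subringCount n (p ^ e) / (p : ℝ) ^ e := by
  rw [eulerTerm, subringArith_apply n (pow_ne_zero e hp)]

lemma isMultiplicative_subringArith (n : ℕ) : (subringArith n).IsMultiplicative := by
  refine ArithmeticFunction.IsMultiplicative.iff_ne_zero.mpr ⟨?_, fun {a b} ha hb hab => ?_⟩
  · rw [subringArith_apply n one_ne_zero, subringCount_one, Nat.cast_one]
  · rw [subringArith_apply n ha, subringArith_apply n hb, subringArith_apply n (mul_ne_zero ha hb),
      subringCount_mul_of_coprime n (Nat.pos_of_ne_zero ha) (Nat.pos_of_ne_zero hb) hab,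
      Nat.cast_mul]

lemma sq_mul_pow_le_pow_max {x : ℝ} (hx : 2 ≤ x) (k : ℕ) :
    x ^ 2 * (21 / 20) ^ k ≤ 8 * x ^ max 2 (k / 10) := by
  obtain ⟨d, hd⟩ := Nat.exists_eq_add_of_le (le_max_left 2 (k / 10))
  have hpow : (21 / 20 : ℝ) ^ k ≤ 8 * x ^ d :=
    calc (21 / 20 : ℝ) ^ k ≤ (21 / 20 : ℝ) ^ (10 * (d + 3)) :=
          pow_le_pow_right₀ (by norm_num) (by omega)
      _ = ((21 / 20 : ℝ) ^ 10) ^ (d + 3) := pow_mul _ _ _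
      _ ≤ 2 ^ (d + 3) := by gcongr; norm_num
      _ = 8 * 2 ^ d := by ring
      _ ≤ 8 * x ^ d := by gcongr
  calc x ^ 2 * (21 / 20) ^ k ≤ x ^ 2 * (8 * x ^ d) := by gcongr
    _ = 8 * x ^ max 2 (k / 10) := by rw [hd]; ring

lemma abs_eulerTerm_subringArith_le (hn : n ≤ 5) (hp : p.Prime) (e : ℕ) :
    |eulerTerm (subringArith n) p (e + 2)| ≤
      1 / (p : ℝ) ^ 2 *
        (960 * (11 * 10 ^ 26) * (((e + 3 : ℕ) : ℝ) ^ 30 * (20 / 21) ^ (e + 2))) := by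
  have hp_pos : (0 : ℝ) < p := by exact_mod_cast hp.pos
  have hcount : (subringCount n (p ^ (e + 2)) : ℝ) * (p : ℝ) ^ max 2 ((e + 2) / 10) ≤
      120 * ((e + 3 : ℕ) : ℝ) ^ 30 * (11 * 10 ^ 26 * (p : ℝ) ^ (e + 2)) := by
    exact_mod_cast subringCount_pow_mul_le hn hp (Nat.le_add_left 2 e)
  have hgeom : (20 / 21 : ℝ) ^ (e + 2) = 1 / (21 / 20) ^ (e + 2) := by
    rw [← one_div_pow, one_div_div]
  rw [eulerTerm_subringArith n hp.ne_zero, abs_of_nonneg (by positivity), hgeom,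
    div_le_iff₀ (by positivity)]
  calc (subringCount n (p ^ (e + 2)) : ℝ)
      = subringCount n (p ^ (e + 2)) * (p ^ 2 * (21 / 20) ^ (e + 2)) /
          (p ^ 2 * (21 / 20) ^ (e + 2)) := by field_simp
    _ ≤ subringCount n (p ^ (e + 2)) * (8 * p ^ max 2 ((e + 2) / 10)) /
          (p ^ 2 * (21 / 20) ^ (e + 2)) := by
        gcongr _ * ?_ / _
        exact sq_mul_pow_le_pow_max (by exact_mod_cast hp.two_le) (e + 2)
    _ = 8 * (subringCount n (p ^ (e + 2)) * p ^ max 2 ((e + 2) / 10)) /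
          (p ^ 2 * (21 / 20) ^ (e + 2)) := by ring
    _ ≤ 8 * (120 * ((e + 3 : ℕ) : ℝ) ^ 30 * (11 * 10 ^ 26 * (p : ℝ) ^ (e + 2))) /
          (p ^ 2 * (21 / 20) ^ (e + 2)) := by gcongr
    _ = _ := by ring

lemma summable_eulerTerm_subringArith (hn : n ≤ 5) :
    Summable fun x : Nat.Primes × ℕ => |eulerTerm (subringArith n) x.1 (x.2 + 2)| := by
  have hgeom : Summable fun k : ℕ => (k : ℝ) ^ 30 * (20 / 21 : ℝ) ^ k :=
    summable_pow_mul_geometric_of_norm_lt_one 30 (by rw [Real.norm_eq_abs, abs_of_pos] <;> norm_num)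
  have hshift : Summable fun e : ℕ =>
      960 * (11 * 10 ^ 26) * (((e + 3 : ℕ) : ℝ) ^ 30 * (20 / 21 : ℝ) ^ (e + 2)) := by
    refine (((summable_nat_add_iff 3).mpr hgeom).mul_left
      (960 * (11 * 10 ^ 26) * (21 / 20))).congr fun e => ?_
    rw [pow_succ (20 / 21 : ℝ) (e + 2)]
    ring
  exact (summable_primes_one_div_sq.mul_of_nonneg hshift (fun p => by positivity)
    fun e => by positivity).of_nonneg_of_le (fun _ => abs_nonneg _)
    fun x => abs_eulerTerm_subringArith_le hn x.1.2 x.2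

theorem isZetaPowerLike_subringArith (hn : n ≤ 5) :
    IsZetaPowerLike (subringArith n) (n * (n - 1) / 2 : ℕ) where
  isMultiplicative := isMultiplicative_subringArith n
  apply_prime hp := by rw [subringArith_apply n hp.ne_zero, subringCount_prime n hp]
  summable_eulerTerm := summable_eulerTerm_subringArith hn
  tsum_eulerTerm_pos {p} hp := by
    refine (summable_eulerTerm_of_summable_primePow (summable_eulerTerm_subringArith hn)
      hp).tsum_pos (fun e => ?_) 0 ?_
    · rw [eulerTerm_subringArith n hp.ne_zero]
      positivity
    · rw [eulerTerm_zero (isMultiplicative_subringArith n)]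
      exact one_pos

lemma summatory_subringArith (n B : ℕ) : summatory (subringArith n) B = subringCountUpTo n B := by
  rw [summatory, Nat.floor_natCast, subringCountUpTo, Nat.cast_sum,
    ← Finset.Icc_add_one_left_eq_Ioc]
  exact sum_congr rfl fun r hr => subringArith_apply n (Nat.pos_iff_ne_zero.mp (mem_Icc.mp hr).1)

end SubringSeries

end SubringAsymptotics

theorem subring_asymptotics_small_n (n : ℕ) (h2 : 2 ≤ n) (h5 : n ≤ 5) :
    ∃ C : ℝ, 0 < C ∧
      Filter.Tendsto
        (fun B : ℕ =>
          (subringCountUpTo n B : ℝ) / ((B : ℝ) * Real.log B ^ (n * (n - 1) / 2 - 1)))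
        Filter.atTop (nhds C) := by
  have hpos : 1 ≤ n * (n - 1) / 2 := by interval_cases n <;> norm_num
  have hzeta := SubringAsymptotics.isZetaPowerLike_subringArith h5
  rw [← Nat.sub_add_cancel hpos] at hzeta
  obtain ⟨C, hC, hlim⟩ := hzeta.exists_tendsto_summatory_div
  refine ⟨C, hC, (hlim.comp tendsto_natCast_atTop_atTop).congr fun B => ?_⟩
  rw [Function.comp_apply, SubringAsymptotics.summatory_subringArith]
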